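/- arXiv:2604.27424 — 4 statements merged into one kernel-verified Lean document; each statement's English description precedes it below -/
import Mathlib

section
/- Let k ≥ 2 be even and let T be a tree on n vertices of diameter exactly k + 3. Then mdi_k(T) > f_k(n). -/
/-- `J` is a distance-`k` independent set in `G`: any two distinct vertices of `J`
are at graph distance at least `k + 1`. -/
def DkIndep {V : Type*} (G : SimpleGraph V) (k : ℕ) (J : Set V) : Prop :=
  ∀ ⦃u⦄, u ∈ J → ∀ ⦃v⦄, v ∈ J → u ≠ v → k + 1 ≤ G.dist u v

/-- `J` is a maximal distance-`k` independent set (`k`-MDIS) of `G`. -/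
def MaxDkIndep {V : Type*} (G : SimpleGraph V) (k : ℕ) (J : Set V) : Prop :=
  DkIndep G k J ∧ ∀ J', DkIndep G k J' → J ⊆ J' → J' = J

/-- `mdi G k` is the number of maximal distance-`k` independent sets of `G`. -/
noncomputable def mdi {V : Type*} (G : SimpleGraph V) (k : ℕ) : ℕ :=
  {J : Set V | MaxDkIndep G k J}.ncard

/-- `f_k(n)` from the paper. -/
def fk (k n : ℕ) : ℕ :=
  if n ≤ k + 1 then n else n - (n - k % 2) / (k / 2 + 1) + 1

/-- closed ball `N_k[x]`. -/
def ball {V : Type*} (G : SimpleGraph V) (k : ℕ) (x : V) : Set V :=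
  {v | G.dist x v ≤ k}

/-- a leaf is a vertex of degree 1. -/
def IsLeaf {V : Type*} (G : SimpleGraph V) (v : V) : Prop :=
  (G.neighborSet v).ncard = 1

/-- eccentricity of a vertex. -/
noncomputable def ecc {V : Type*} [Fintype V] (G : SimpleGraph V) (v : V) : ℕ :=
  Finset.univ.sup (G.dist v)

/-- diameter of a finite graph. -/
noncomputable def gdiam {V : Type*} [Fintype V] (G : SimpleGraph V) : ℕ :=
  Finset.univ.sup (ecc G)

/-- a central vertex is one of minimum eccentricity. -/
def IsCentral {V : Type*} [Fintype V] (G : SimpleGraph V) (v : V) : Prop :=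
  ∀ u, ecc G v ≤ ecc G u

/-- a `k`-twin: some other vertex has the same closed `k`-ball. -/
def KTwin {V : Type*} (G : SimpleGraph V) (k : ℕ) (u : V) : Prop :=
  ∃ v, v ≠ u ∧ ball G k u = ball G k v

/-- a diametral leaf: a leaf whose eccentricity equals the diameter. -/
def IsDiametralLeaf {V : Type*} [Fintype V] (G : SimpleGraph V) (u : V) : Prop :=
  IsLeaf G u ∧ ecc G u = gdiam G

/-- a `k`-special pair. -/
def KSpecial {V : Type*} [Fintype V] (G : SimpleGraph V) (k : ℕ) (x y : V) : Prop :=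
  IsDiametralLeaf G x ∧ IsDiametralLeaf G y ∧ KTwin G k x ∧ KTwin G k y ∧
    ball G k x ≠ ball G k y

/-- `mdi*_k(G, ℓ)`. -/
noncomputable def mdiStar {V : Type*} (G : SimpleGraph V) (k : ℕ) (ℓ : V) : ℕ :=
  {J : Set V | MaxDkIndep G k J ∧ ℓ ∈ J ∧ ∃ w ∉ J, ball G k w ∩ J = {ℓ}}.ncard

/-- The spider tree `S_{p,m}`: a center (`none`) together with `p` legs of `m` vertices. -/
def spider (p m : ℕ) : SimpleGraph (Option (Fin p × Fin m)) :=
  SimpleGraph.fromRel fun a b =>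
    match a, b with
    | none, some (_, j) => (j : ℕ) = 0
    | some (i, j), some (i', j') => i = i' ∧ (j : ℕ) + 1 = (j' : ℕ)
    | _, _ => False

/-- `S'_{p,m}`: the spider `S_{p,m}` with one leaf at distance `m` from the center removed. -/
def spider' (p m : ℕ) (hp : 0 < p) (hm : 0 < m) :=
  (spider p m).induce
    {v | v ≠ some (⟨0, hp⟩, ⟨m - 1, Nat.sub_lt hm Nat.one_pos⟩)}

/-- The double spider `B_{p₁,p₂,s}`: two adjacent centers (`Sum.inl false`, `Sum.inl true`),
with `p₁` legs of `s` vertices on the first and `p₂` legs of `s` vertices on the second. -/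
def btree (p₁ p₂ s : ℕ) : SimpleGraph (Bool ⊕ ((Fin p₁ ⊕ Fin p₂) × Fin s)) :=
  SimpleGraph.fromRel fun a b =>
    match a, b with
    | Sum.inl x, Sum.inl y => x ≠ y
    | Sum.inl false, Sum.inr (Sum.inl _, j) => (j : ℕ) = 0
    | Sum.inl true, Sum.inr (Sum.inr _, j) => (j : ℕ) = 0
    | Sum.inr (c, j), Sum.inr (c', j') => c = c' ∧ (j : ℕ) + 1 = (j' : ℕ)
    | _, _ => False

/-- `G` contains a subgraph isomorphic to `H`. -/
def ContainsSub {V W : Type*} (G : SimpleGraph V) (H : SimpleGraph W) : Prop :=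
  ∃ f : W → V, Function.Injective f ∧ ∀ a b, H.Adj a b → G.Adj (f a) (f b)

/-- A pendant path on `s` vertices `P 0, …, P (s-1)` attached to `w`:
`P 0` is a leaf, consecutive vertices are adjacent, interior vertices have degree 2,
and `P (s-1)` is adjacent to `w`. -/
def IsPendantPath {V : Type*} (T : SimpleGraph V) (s : ℕ) (P : ℕ → V) (w : V) : Prop :=
  Set.InjOn P (Set.Iio s) ∧ (∀ i < s, P i ≠ w) ∧ IsLeaf T (P 0) ∧
    (∀ i, i + 1 < s → T.Adj (P i) (P (i + 1))) ∧
    (∀ i, 0 < i → i < s → (T.neighborSet (P i)).ncard = 2) ∧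
    T.Adj (P (s - 1)) w

/-- Isomorphism of simple graphs on `Fin n` as a setoid. -/
def graphSetoid (n : ℕ) : Setoid (SimpleGraph (Fin n)) where
  r G H := Nonempty (G ≃g H)
  iseqv := ⟨fun _ => ⟨SimpleGraph.Iso.refl⟩, fun ⟨e⟩ => ⟨e.symm⟩, fun ⟨e⟩ ⟨f⟩ => ⟨e.trans f⟩⟩

/-- The number of isomorphism classes of graphs in a set of graphs on `Fin n`. -/
noncomputable def numIsoClasses {n : ℕ} (S : Set (SimpleGraph (Fin n))) : ℕ :=
  ((fun G => Quotient.mk (graphSetoid n) G) '' S).ncard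


namespace Stmt13

open SimpleGraph

lemma exists_mid {V : Type} {T : SimpleGraph V} (hc : T.Connected) (x y : V) (j : ℕ)
    (hj : j ≤ T.dist x y) : ∃ z, T.dist x z = j ∧ T.dist z y = T.dist x y - j := by
  obtain ⟨p, hp⟩ := hc.exists_walk_length_eq_dist x y
  refine ⟨p.getVert j, ?_⟩
  have h1 := SimpleGraph.dist_le (p.take j)
  have h2 := SimpleGraph.dist_le (p.drop j)
  have h3 := hc.dist_triangle (u := x) (v := p.getVert j) (w := y)
  rw [Walk.take_length] at h1
  rw [Walk.drop_length] at h2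
  omega

lemma unique_closer {V : Type} {T : SimpleGraph V} (hT : T.IsTree) {z p q u : V}
    (hp : T.Adj z p) (hq : T.Adj z q) (h1 : T.dist p u + 1 = T.dist z u)
    (h2 : T.dist q u + 1 = T.dist z u) : p = q := by
  obtain ⟨w1, hw1⟩ := hT.connected.exists_walk_length_eq_dist p u
  obtain ⟨w2, hw2⟩ := hT.connected.exists_walk_length_eq_dist q u
  have e1 : (Walk.cons hp w1).IsPath := Walk.isPath_of_length_eq_dist _ (by simp; omega)
  have e2 : (Walk.cons hq w2).IsPath := Walk.isPath_of_length_eq_dist _ (by simp; omega)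
  have h := (hT.existsUnique_path z u).unique e1 e2
  have := congrArg (fun w => w.getVert 1) h
  simpa using this

/-- crossing edge -/
lemma cross_edge {V : Type} {T : SimpleGraph V} (hT : T.IsTree) {u u' z z' : V}
    (hu : T.Adj u u') (hz : T.Adj z z') (h1 : T.dist z u' = T.dist z u + 1)
    (h2 : T.dist z' u = T.dist z' u' + 1) : z = u ∧ z' = u' := by
  have a1 := hT.dist_eq_dist_add_one_of_adj u hz
  have a2 := hT.dist_eq_dist_add_one_of_adj u' hz
  simp only [dist_comm (u := u), dist_comm (u := u')] at a1 a2
  have hab : T.dist z u = T.dist z' u' := by omega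
  have h0 : T.dist z u = 0 := by
    by_contra h0
    obtain ⟨w, hw1, hw2⟩ := exists_mid hT.connected z u 1 (by omega)
    have hw : T.Adj z w := dist_eq_one_iff_adj.1 hw1
    have t := hT.connected.dist_triangle (u := w) (v := u) (w := u')
    have t' := hT.connected.dist_triangle (u := z) (v := w) (w := u')
    have := dist_eq_one_iff_adj.2 hu
    have := unique_closer hT (u := u') hz hw (by omega) (by omega)
    subst this
    omega
  exact ⟨hT.connected.dist_eq_zero_iff.1 h0, hT.connected.dist_eq_zero_iff.1 (by omega)⟩

lemma cross_walk {V : Type} {T : SimpleGraph V} (hT : T.IsTree) {u u' : V} (hu : T.Adj u u')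
    {w v : V} (p : T.Walk w v) (h1 : T.dist w u' = T.dist w u + 1)
    (h2 : T.dist v u = T.dist v u' + 1) : T.dist w u + T.dist v u' + 1 ≤ p.length := by
  induction p with
  | nil => omega
  | @cons a b c hab p ih =>
    rcases hT.dist_eq_dist_add_one_of_adj b hu with h | h
    · obtain ⟨rfl, rfl⟩ := cross_edge hT hu hab h1 h
      have := SimpleGraph.dist_le p
      rw [dist_comm] at this
      simp only [dist_self, Walk.length_cons]
      omega
    · have := ih h h2
      have t := hT.connected.dist_triangle (u := a) (v := b) (w := u)
      have := dist_eq_one_iff_adj.2 hab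
      simp only [Walk.length_cons]
      omega

lemma cross {V : Type} {T : SimpleGraph V} (hT : T.IsTree) {u u' : V} (hu : T.Adj u u')
    {w v : V} (h1 : T.dist w u' = T.dist w u + 1)
    (h2 : T.dist v u = T.dist v u' + 1) : T.dist w v = T.dist w u + T.dist v u' + 1 := by
  obtain ⟨p, hp⟩ := hT.connected.exists_walk_length_eq_dist w v
  have := cross_walk hT hu p h1 h2
  have t := hT.connected.dist_triangle (u := w) (v := u') (w := v)
  rw [dist_comm (u := u')] at t
  omega

lemma four {V : Type} {T : SimpleGraph V} (hT : T.IsTree) (w c v : V) : ∀ (m : ℕ) (u : V),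
    T.dist u v = m → T.dist u v + T.dist w c ≤
      max (T.dist w u + T.dist v c) (T.dist u c + T.dist w v) := by
  intro m
  induction m with
  | zero =>
    intro u h
    obtain rfl := hT.connected.dist_eq_zero_iff.1 h
    have t := hT.connected.dist_triangle (u := w) (v := u) (w := c)
    simp only [dist_self]
    omega
  | succ m ih =>
    intro u h
    obtain ⟨u', h1, h2⟩ := exists_mid hT.connected u v 1 (by omega)
    have hu : T.Adj u u' := dist_eq_one_iff_adj.1 h1
    have hv : T.dist v u = T.dist v u' + 1 := by
      rw [dist_comm, dist_comm (u := v)]; omega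
    have := ih u' (by omega)
    have s1 := dist_comm (G := T) (u := v) (v := u)
    have s2 := dist_comm (G := T) (u := v) (v := u')
    have s3 := dist_comm (G := T) (u := c) (v := u)
    have s4 := dist_comm (G := T) (u := c) (v := u')
    have s5 := dist_comm (G := T) (u := v) (v := c)
    have s6 := dist_comm (G := T) (u := w) (v := c)
    have t := hT.connected.dist_triangle (u := w) (v := u) (w := c)
    rcases hT.dist_eq_dist_add_one_of_adj w hu with hw | hw <;>
    rcases hT.dist_eq_dist_add_one_of_adj c hu with hc | hc
    · omega
    · have e1 := cross hT hu hc hv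
      have e2 := cross hT hu hc hw
      omega
    · have e1 := cross hT hu hw hv
      have e2 := cross hT hu hw hc
      omega
    · have e1 := cross hT hu hw hv
      omega

lemma extend {V : Type} [Fintype V] (T : SimpleGraph V) (k : ℕ) (S : Set V)
    (hS : DkIndep T k S) : ∃ J, S ⊆ J ∧ MaxDkIndep T k J := by
  obtain ⟨J, hJ, hm⟩ := (Set.toFinite {J | DkIndep T k J}).exists_le_maximal hS
  exact ⟨J, hJ, hm.1, fun J' h1 h2 => (hm.eq_of_ge h1 h2)⟩

/-- packing bound -/
lemma packing {V : Type} [Fintype V] {T : SimpleGraph V} (hc : T.Connected) (s : ℕ) (X : Set V)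
    (hX : DkIndep T (2 * s - 2) X) (hs : 1 ≤ s) (hfar : ∀ x, ∃ y, s ≤ T.dist x y) :
    X.ncard * s ≤ Fintype.card V := by
  have : ∀ x : V, ∀ j : Fin s, ∃ z, T.dist x z = j := by
    intro x j
    obtain ⟨y, hy⟩ := hfar x
    obtain ⟨z, hz, -⟩ := exists_mid hc x y j (by omega)
    exact ⟨z, hz⟩
  choose g hg using this
  have hinj : Function.Injective (fun p : X × Fin s => g p.1 p.2) := by
    rintro ⟨⟨x, hx⟩, i⟩ ⟨⟨y, hy⟩, j⟩ h
    simp only at h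
    have h1 := hg x i
    have h2 := hg y j
    rw [h] at h1
    by_cases hxy : x = y
    · subst hxy
      have : i = j := Fin.ext (by omega)
      subst this; rfl
    · have := hX hx hy hxy
      have t := hc.dist_triangle (u := x) (v := g y j) (w := y)
      rw [dist_comm (u := g y j)] at t
      omega
  have := Nat.card_le_card_of_injective _ hinj
  simpa [Nat.card_prod, Set.ncard] using this

lemma indep_insert {V : Type} {T : SimpleGraph V} {k : ℕ} {S : Set V} {u : V}
    (hS : DkIndep T k S) (h : ∀ x ∈ S, k + 1 ≤ T.dist x u) : DkIndep T k (insert u S) := by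
  intro a ha b hb hab
  rcases ha with rfl | ha <;> rcases hb with rfl | hb
  · exact absurd rfl hab
  · rw [dist_comm]; exact h _ hb
  · exact h _ ha
  · exact hS ha hb hab

lemma main_count {V : Type} [Fintype V] {T : SimpleGraph V} {s k : ℕ}
    (hk : k = 2 * s - 2) (hs : 2 ≤ s) (side : V → Bool) (dep : V → ℕ)
    (h1 : ∀ u v, side u ≠ side v → T.dist u v = dep u + dep v + 1)
    (h2 : ∀ u v, side u = side v → T.dist u v ≤ dep u + dep v)
    (h4 : ∀ v, dep v ≤ s)
    (h6 : ∀ x v w, side x = side v → side v = side w → dep x = s → dep v = s →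
      k + 1 ≤ T.dist v w → T.dist x v ≤ k → k + 1 ≤ T.dist x w)
    (h7 : ∀ b, ∃ y, side y = b ∧ dep y = s)
    (h8 : ∀ x, dep x = s → ∃ a, side a = side x ∧ dep a = s - 1 ∧ T.dist x a = 1) :
    ∃ X, DkIndep T k X ∧ Fintype.card V + 2 ≤ mdi T k + X.ncard := by
  classical
  obtain ⟨X0, -, hm0⟩ := (Set.toFinite {J | DkIndep T k J ∧ ∀ v ∈ J, dep v = s}).exists_le_maximal
    (a := ∅) ⟨by intro a ha; exact absurd ha (by simp), by simp⟩
  obtain ⟨X, hX0X, hX⟩ := extend T k X0 hm0.1.1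
  have P1 : ∀ u, dep u = s → u ∉ X0 → ∃ x ∈ X0, T.dist x u ≤ k := by
    intro u hu huX
    by_contra hcon
    push Not at hcon
    have hins := indep_insert hm0.1.1 (u := u) hcon
    have := hm0.eq_of_ge (y := insert u X0) ⟨hins, by
      rintro v (rfl | hv)
      · exact hu
      · exact hm0.1.2 v hv⟩ (Set.subset_insert _ _)
    exact huX (this ▸ Set.mem_insert _ _)
  have P2 : ∀ u, u ∉ X → ∃ x ∈ X, T.dist x u ≤ k := by
    intro u huX
    by_contra hcon
    push Not at hcon
    have hins := indep_insert hX.1 (u := u) hcon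
    have := hX.2 _ hins (Set.subset_insert _ _)
    exact huX (this ▸ Set.mem_insert _ _)
  have hit : ∀ b, ∃ x ∈ X0, side x = b := by
    intro b
    obtain ⟨y, hy, hys⟩ := h7 b
    by_cases hyX : y ∈ X0
    · exact ⟨y, hyX, hy⟩
    · obtain ⟨x, hx, hd⟩ := P1 y hys hyX
      refine ⟨x, hx, ?_⟩
      by_contra hne
      have := h1 x y (by rw [hy]; exact hne)
      have := hm0.1.2 x hx
      omega
  have low : ∀ v ∈ X, s - 1 ≤ dep v := by
    intro v hv
    obtain ⟨x, hx, hxs⟩ := hit (side v)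
    have hxd := hm0.1.2 x hx
    by_cases hxv : x = v
    · subst hxv; omega
    · have := hX.1 (hX0X hx) hv hxv
      have := h2 x v hxs
      omega
  have Q : ∀ v, v ∉ X → ∃ x ∈ X, side x = side v ∧ T.dist x v ≤ k := by
    intro v hv
    by_cases hl : s - 1 ≤ dep v
    · obtain ⟨x, hx, hd⟩ := P2 v hv
      refine ⟨x, hx, ?_, hd⟩
      by_contra hne
      have := h1 x v hne
      have := low x hx
      omega
    · obtain ⟨x, hx, hxs⟩ := hit (side v)
      refine ⟨x, hX0X hx, hxs, ?_⟩
      have := h2 x v hxs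
      have := h4 x
      omega
  have star1 : ∀ v w, v ∉ X → side v = side w → dep v = s → k + 1 ≤ T.dist v w →
      ∃ x ∈ X, T.dist x v ≤ k ∧ k + 1 ≤ T.dist x w ∧ side x = side v := by
    intro v w hv hvw hd hc
    obtain ⟨x, hx, hxd⟩ := P1 v hd (fun h => hv (hX0X h))
    have hxs := hm0.1.2 x hx
    have hxv : side x = side v := by
      by_contra hne
      have := h1 x v hne
      omega
    exact ⟨x, hX0X hx, hxd, h6 x v w hxv hvw hxs hd hc hxd, hxv⟩
  have star2 : ∀ v w, v ∉ X → side v ≠ side w → s - 1 ≤ dep w →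
      ∃ x ∈ X, T.dist x v ≤ k ∧ k + 1 ≤ T.dist x w ∧ side x = side v := by
    intro v w hv hvw hd
    obtain ⟨x, hx, hxv, hxd⟩ := Q v hv
    have := h1 x w (by rw [hxv]; exact hvw)
    have := low x hx
    exact ⟨x, hx, hxd, by omega, hxv⟩
  have star : ∀ v w, v ∉ X → w ∉ X → k + 1 ≤ T.dist v w →
      (∃ x ∈ X, T.dist x v ≤ k ∧ k + 1 ≤ T.dist x w ∧ side x = side v) ∨
      (∃ x ∈ X, T.dist x w ≤ k ∧ k + 1 ≤ T.dist x v ∧ side x = side w) := by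
    intro v w hv hw hc
    by_cases hvw : side v = side w
    · have := h2 v w hvw
      have := h4 v
      have := h4 w
      by_cases hd : dep v = s
      · exact Or.inl (star1 v w hv hvw hd hc)
      · exact Or.inr (star1 w v hw hvw.symm (by omega) (by rwa [dist_comm]))
    · have := h1 v w hvw
      by_cases hd : s - 1 ≤ dep w
      · exact Or.inl (star2 v w hv hvw hd)
      · exact Or.inr (star2 w v hw (Ne.symm hvw) (by omega))
  have conf : ∀ J, MaxDkIndep T k J → ∀ x ∈ J, ∀ y ∈ J, T.dist x y ≤ k → x = y := by
    intro J hJ x hx y hy hd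
    by_contra hne
    have := hJ.1 hx hy hne
    omega
  -- the family
  have hJ : ∀ v : V, ∃ J, MaxDkIndep T k J ∧ v ∈ J ∧ ∀ x ∈ X, k + 1 ≤ T.dist x v → x ∈ J := by
    intro v
    obtain ⟨J, hJ, hJm⟩ := extend T k (insert v {x ∈ X | k + 1 ≤ T.dist x v})
      (indep_insert (fun a ha b hb hab => hX.1 ha.1 hb.1 hab) (fun x hx => hx.2))
    exact ⟨J, hJm, hJ (Set.mem_insert _ _), fun x hx h => hJ (Set.mem_insert_of_mem _ ⟨hx, h⟩)⟩
  choose J hJm hJv hJx using hJ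
  have hab : ∀ c, ∃ a, side a = c ∧ dep a = s - 1 ∧ a ∉ X := by
    intro c
    obtain ⟨x, hx, hxc⟩ := hit c
    obtain ⟨a, ha, had, hd⟩ := h8 x (hm0.1.2 x hx)
    refine ⟨a, ha.trans hxc, had, fun haX => ?_⟩
    have := conf X hX x (hX0X hx) a haX (by omega)
    subst this
    simp at hd
  obtain ⟨a, has, had, haX⟩ := hab true
  obtain ⟨b, hbs, hbd, hbX⟩ := hab false
  have habc : k + 1 ≤ T.dist b a := by
    have := h1 b a (by simp [has, hbs]); omega
  obtain ⟨K, hKsub, hK⟩ := extend T k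
    (insert a (insert b {x ∈ X | k + 1 ≤ T.dist x a ∧ k + 1 ≤ T.dist x b}))
    (indep_insert (indep_insert (fun a ha b hb hab => hX.1 ha.1 hb.1 hab) (fun x hx => hx.2.2))
      (by
        rintro x (rfl | hx)
        · exact habc
        · exact hx.2.1))
  have haK : a ∈ K := hKsub (Set.mem_insert _ _)
  have hbK : b ∈ K := hKsub (Set.mem_insert_of_mem _ (Set.mem_insert _ _))
  have hxK : ∀ x ∈ X, k + 1 ≤ T.dist x a → k + 1 ≤ T.dist x b → x ∈ K := fun x hx h h' =>
    hKsub (Set.mem_insert_of_mem _ (Set.mem_insert_of_mem _ ⟨hx, h, h'⟩))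
  -- K differs from each J v
  have key : ∀ v, v ∉ X → ∀ c e, side c = side v → side e ≠ side v → dep c = s - 1 →
      dep e = s - 1 → c ∉ X → e ∉ X → c ∈ J v → e ∈ J v →
      (∀ x ∈ X, k + 1 ≤ T.dist x c → k + 1 ≤ T.dist x e → x ∈ J v) → False := by
    intro v hv c e hcv hev hcd hed hcX heX hcJ heJ hx
    by_cases hvc : v = c
    · subst hvc
      obtain ⟨x, hxX, hxe, hxv, -⟩ := star2 e v heX hev (by omega)
      have := conf _ (hJm v) x (hJx v x hxX hxv) e heJ hxe
      exact heX (this ▸ hxX)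
    · have hcomp := (hJm v).1 (hJv v) hcJ hvc
      rcases star v c hv hcX hcomp with ⟨x, hxX, hxv, hxc, hxs⟩ | ⟨x, hxX, hxc, hxv, hxs⟩
      · have := h1 x e (by rw [hxs]; exact hev.symm)
        have := low x hxX
        have := conf _ (hJm v) x (hx x hxX hxc (by omega)) v (hJv v) hxv
        exact hv (this ▸ hxX)
      · have := conf _ (hJm v) x (hJx v x hxX hxv) c hcJ hxc
        exact hcX (this ▸ hxX)
  have hKJ : ∀ v, v ∉ X → J v ≠ K := by
    intro v hv hEq
    cases hsv : side v with
    | true =>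
      exact key v hv a b (by rw [has, hsv]) (by simp [hbs, hsv]) had hbd haX hbX (hEq ▸ haK)
        (hEq ▸ hbK) (fun x hx h h' => hEq ▸ hxK x hx h h')
    | false =>
      exact key v hv b a (by rw [hbs, hsv]) (by simp [has, hsv]) hbd had hbX haX (hEq ▸ hbK)
        (hEq ▸ haK) (fun x hx h h' => hEq ▸ hxK x hx h' h)
  have hJinj : ∀ v w, v ∉ X → w ∉ X → J v = J w → v = w := by
    intro v w hv hw hEq
    by_contra hne
    have hwJ : w ∈ J v := hEq ▸ hJv w
    have hcomp := (hJm v).1 (hJv v) hwJ hne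
    rcases star v w hv hw hcomp with ⟨x, hxX, hxv, hxw, -⟩ | ⟨x, hxX, hxw, hxv, -⟩
    · have := conf _ (hJm v) x (hEq ▸ hJx w x hxX hxw) v (hJv v) hxv
      exact hv (this ▸ hxX)
    · have := conf _ (hJm v) x (hJx v x hxX hxv) w hwJ hxw
      exact hw (this ▸ hxX)
  refine ⟨X, hX.1, ?_⟩
  have hcard : (insert K (insert X (J '' Xᶜ))).ncard ≤ mdi T k := by
    apply Set.ncard_le_ncard _ (Set.toFinite _)
    rintro S (rfl | rfl | ⟨v, -, rfl⟩)
    · exact hK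
    · exact hX
    · exact hJm v
  rw [Set.ncard_insert_of_notMem, Set.ncard_insert_of_notMem, Set.ncard_image_of_injOn] at hcard
  · have := Set.ncard_add_ncard_compl X
    rw [Nat.card_eq_fintype_card] at this
    omega
  · intro v hv w hw h
    exact hJinj v w hv hw h
  · rintro ⟨v, hv, h⟩
    exact hv (h ▸ hJv v)
  · rintro (h | ⟨v, hv, h⟩)
    · exact haX (h ▸ haK)
    · exact hKJ v hv h

end Stmt13

/-- Let `k ≥ 2` be even and let `T` be a tree on `n` vertices of diameter
exactly `k + 3`. Then `mdi_k(T) > f_k(n)`. -/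
theorem stmt_13 (k : ℕ) (hk : 2 ≤ k) (hke : Even k) {V : Type} [Fintype V]
    {n : ℕ} (hn : Fintype.card V = n) (T : SimpleGraph V) (hT : T.IsTree)
    (hdiam : gdiam T = k + 3) :
    fk k n < mdi T k := by
  classical
  obtain ⟨r, hr⟩ := hke
  have hc := hT.connected
  have hle : ∀ u v, T.dist u v ≤ k + 3 := by
    intro u v
    rw [← hdiam]
    exact (Finset.le_sup (f := T.dist u) (Finset.mem_univ v)).trans
      (Finset.le_sup (f := ecc T) (Finset.mem_univ u))
  have : Nonempty V := hc.nonempty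
  obtain ⟨x, -, hx⟩ := Finset.exists_mem_eq_sup Finset.univ Finset.univ_nonempty (ecc T)
  obtain ⟨y, -, hy⟩ := Finset.exists_mem_eq_sup Finset.univ Finset.univ_nonempty (T.dist x)
  have hxy : T.dist x y = k + 3 := by
    rw [← hdiam]; unfold gdiam; rw [hx]; unfold ecc; rw [hy]
  obtain ⟨s, hs⟩ : ∃ s, s = r + 1 := ⟨_, rfl⟩
  obtain ⟨c1, hx1, h1y⟩ := Stmt13.exists_mid hc x y s (by omega)
  obtain ⟨c2, h12, h2y⟩ := Stmt13.exists_mid hc c1 y 1 (by omega)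
  have hadj : T.Adj c1 c2 := SimpleGraph.dist_eq_one_iff_adj.1 h12
  have hx2 : T.dist x c2 = T.dist x c1 + 1 := by
    have t1 := hc.dist_triangle (u := x) (v := c2) (w := y)
    have t2 := hc.dist_triangle (u := x) (v := c1) (w := c2)
    omega
  have s1 := SimpleGraph.dist_comm (G := T) (u := c1) (v := y)
  have s2 := SimpleGraph.dist_comm (G := T) (u := c2) (v := y)
  have hpar : ∀ v, T.dist v c2 = T.dist v c1 + 1 ∨ T.dist v c1 = T.dist v c2 + 1 := fun v =>
    (hT.dist_eq_dist_add_one_of_adj v hadj).symm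
  let side : V → Bool := fun v => decide (T.dist v c1 < T.dist v c2)
  let dep : V → ℕ := fun v => min (T.dist v c1) (T.dist v c2)
  have st : ∀ v, side v = true ↔ T.dist v c2 = T.dist v c1 + 1 := by
    intro v
    simp only [side, decide_eq_true_eq]
    have := hpar v
    omega
  have sf : ∀ v, side v = false ↔ T.dist v c1 = T.dist v c2 + 1 := by
    intro v
    simp only [side, decide_eq_false_iff_not]
    have := hpar v
    omega
  have hcr : ∀ u v, side u = true → side v = false → T.dist u v = dep u + dep v + 1 := by
    intro u v hu hv
    rw [st] at hu
    rw [sf] at hv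
    rw [Stmt13.cross hT hadj hu hv]
    simp only [dep]
    omega
  have h1 : ∀ u v, side u ≠ side v → T.dist u v = dep u + dep v + 1 := by
    intro u v h
    cases hu : side u <;> cases hv : side v
    · simp [hu, hv] at h
    · rw [SimpleGraph.dist_comm, hcr v u hv hu]; omega
    · exact hcr u v hu hv
    · simp [hu, hv] at h
  have hroot : ∀ b, ∃ c, ∀ v, side v = b → T.dist v c = dep v := by
    intro b
    cases b
    · refine ⟨c2, fun v hv => ?_⟩
      rw [sf] at hv
      simp only [dep]; omega
    · refine ⟨c1, fun v hv => ?_⟩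
      rw [st] at hv
      simp only [dep]; omega
  have h7 : ∀ b, ∃ y, side y = b ∧ dep y = s := by
    intro b
    cases b
    · refine ⟨y, ?_, ?_⟩
      · rw [sf]; omega
      · simp only [dep]; omega
    · refine ⟨x, ?_, ?_⟩
      · rw [st]; omega
      · simp only [dep]; omega
  have hopp : ∀ v, ∃ z, T.dist v z = dep v + s + 1 := by
    intro v
    obtain ⟨z, hz, hzd⟩ := h7 (!side v)
    refine ⟨z, ?_⟩
    rw [h1 v z (by rw [hz]; simp), hzd]
  have h4 : ∀ v, dep v ≤ s := by
    intro v
    obtain ⟨z, hz⟩ := hopp v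
    have := hle v z
    omega
  have h2 : ∀ u v, side u = side v → T.dist u v ≤ dep u + dep v := by
    intro u v h
    obtain ⟨c, hcc⟩ := hroot (side u)
    have e1 := hcc u rfl
    have e2 := hcc v h.symm
    have t := hc.dist_triangle (u := u) (v := c) (w := v)
    rw [SimpleGraph.dist_comm (u := c)] at t
    omega
  have h6 : ∀ x v w, side x = side v → side v = side w → dep x = s → dep v = s →
      k + 1 ≤ T.dist v w → T.dist x v ≤ k → k + 1 ≤ T.dist x w := by
    intro x v w hxv hvw hxd hvd hd hd'
    obtain ⟨c, hcc⟩ := hroot (side v)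
    have e1 := hcc x hxv
    have e2 := hcc v rfl
    have e3 := hcc w hvw.symm
    have e4 := h4 w
    have f := Stmt13.four hT x c w _ v rfl
    rw [e1, e2, e3] at f
    omega
  have h8 : ∀ x, dep x = s → ∃ a, side a = side x ∧ dep a = s - 1 ∧ T.dist x a = 1 := by
    intro x hxd
    obtain ⟨c, hcc⟩ := hroot (side x)
    have e1 := hcc x rfl
    obtain ⟨a, ha1, ha2⟩ := Stmt13.exists_mid hc x c 1 (by omega)
    have hsa : side a = side x := by
      by_contra hne
      have := h1 x a (Ne.symm hne)
      omega
    refine ⟨a, hsa, ?_, ha1⟩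
    rw [← hcc a hsa]
    omega
  obtain ⟨X, hX, hcount⟩ := Stmt13.main_count (T := T) (s := s) (k := k) (by omega) (by omega)
    side dep h1 h2 h4 h6 h7 h8
  have hpack := Stmt13.packing hc s X (by rwa [show 2 * s - 2 = k by omega]) (by omega)
    (fun v => by
      obtain ⟨z, hz⟩ := hopp v
      exact ⟨z, by omega⟩)
  have hbig : k + 3 < Fintype.card V := by
    obtain ⟨p, hp, hpl⟩ := hc.exists_path_of_dist x y
    have := hp.length_lt
    omega
  rw [hn] at hcount hpack hbig
  have hdiv : X.ncard ≤ n / s := (Nat.le_div_iff_mul_le (by omega)).2 hpack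
  have hdiv2 : n / s ≤ n := Nat.div_le_self _ _
  unfold fk
  rw [if_neg (by omega), show k % 2 = 0 by omega, show k / 2 + 1 = s by omega, Nat.sub_zero]
  omega
end

section
/- Let k ≥ 3 be odd and let T be a tree on n vertices of diameter k + 1, where n = p·(⌊k/2⌋+1) + r + 1 with p ≥ 2 and 0 ≤ r ≤ ⌊k/2⌋. Then mdi_k(T) ≥ f_k(n), with equality if and only if T contains a subtree isomorphic to S_{p,⌊k/2⌋+1} and T contains no k-special pair. -/
namespace Stmt15
open SimpleGraph

section tree
variable {V : Type} {T : SimpleGraph V}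

noncomputable def tp (hT : T.IsTree) (c v : V) : T.Walk c v :=
  (hT.connected.exists_path_of_dist c v).choose

lemma tp_path (hT : T.IsTree) (c v : V) : (tp hT c v).IsPath :=
  (hT.connected.exists_path_of_dist c v).choose_spec.1

lemma tp_length (hT : T.IsTree) (c v : V) : (tp hT c v).length = T.dist c v :=
  (hT.connected.exists_path_of_dist c v).choose_spec.2

lemma path_eq (hT : T.IsTree) {c v : V} {p : T.Walk c v} (hp : p.IsPath) : p = tp hT c v :=
  congrArg Subtype.val ((hT.isAcyclic.subsingleton_path c v).elim ⟨p, hp⟩ ⟨_, tp_path hT c v⟩)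

lemma path_length (hT : T.IsTree) {c v : V} {p : T.Walk c v} (hp : p.IsPath) :
    p.length = T.dist c v := by
  rw [path_eq hT hp, tp_length]

/-- branch -/
noncomputable def br (hT : T.IsTree) (c v : V) : V := (tp hT c v).snd

lemma br_of_mem (hT : T.IsTree) {c v z : V} (hz : z ≠ c) (h : z ∈ (tp hT c v).support) :
    br hT c z = br hT c v := by
  classical
  have h1 := (tp_path hT c v).takeUntil h
  unfold br
  rw [← path_eq hT h1, Walk.snd_takeUntil hz]

lemma dist_of_br_ne (hT : T.IsTree) {c x y : V} (h : br hT c x ≠ br hT c y) :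
    T.dist x y = T.dist c x + T.dist c y := by
  have hq := tp_path hT c y
  have hp := tp_path hT c x
  have : ((tp hT c x).reverse.append (tp hT c y)).IsPath := by
    rw [Walk.isPath_def, Walk.support_append, List.nodup_append']
    refine ⟨by simpa using hp.support_nodup, hq.support_nodup.tail, ?_⟩
    intro z hz hz'
    have hzc : z ≠ c := by
      rintro rfl
      have := hq.support_nodup
      rw [← Walk.cons_tail_support] at this
      exact (List.nodup_cons.1 this).1 hz'
    rw [Walk.support_reverse, List.mem_reverse] at hz
    exact h ((br_of_mem hT hzc hz).symm.trans (br_of_mem hT hzc (List.mem_of_mem_tail hz')))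
  rw [← path_length hT this]
  simp [tp_length]

lemma dist_br (hT : T.IsTree) {c x : V} (h : x ≠ c) :
    T.dist (br hT c x) x + 1 ≤ T.dist c x := by
  have hn : ¬ (tp hT c x).Nil := Walk.not_nil_of_ne h.symm
  rw [← tp_length hT c x, ← Walk.length_tail_add_one hn]
  exact Nat.succ_le_succ (dist_le _)

lemma dist_of_br_eq (hT : T.IsTree) {c x y : V} (hx : x ≠ c) (hy : y ≠ c)
    (h : br hT c x = br hT c y) :
    T.dist x y + 2 ≤ T.dist c x + T.dist c y := by
  have h1 := dist_br hT hx
  have h2 := dist_br hT hy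
  have h3 := hT.connected.dist_triangle (u := x) (v := br hT c x) (w := y)
  rw [dist_comm (u := x) (v := br hT c x)] at h3
  rw [← h] at h2
  omega

lemma exists_center [Fintype V] (hT : T.IsTree) {m : ℕ} (hm : 1 ≤ m) (hd : gdiam T = 2 * m) :
    ∃ c u v, (∀ w, T.dist c w ≤ m) ∧ T.dist c u = m ∧ T.dist c v = m ∧
      br hT c u ≠ br hT c v := by
  have hle : ∀ u v, T.dist u v ≤ 2 * m := fun u v => by
    rw [← hd]
    exact (Finset.le_sup (f := T.dist u) (Finset.mem_univ v)).trans
      (Finset.le_sup (f := ecc T) (Finset.mem_univ u))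
  have : Nonempty V := hT.connected.nonempty
  obtain ⟨u, -, hu⟩ := Finset.exists_mem_eq_sup Finset.univ Finset.univ_nonempty (ecc T)
  obtain ⟨v, -, hv⟩ := Finset.exists_mem_eq_sup Finset.univ Finset.univ_nonempty (T.dist u)
  have huv : T.dist u v = 2 * m := by
    rw [← hv, ← hd]; exact hu.symm
  set c := (tp hT u v).getVert m with hc
  have hl := tp_length hT u v
  have h1 : T.dist c u ≤ m := by
    rw [dist_comm]
    refine (dist_le ((tp hT u v).take m)).trans ?_
    simp
  have h2 : T.dist c v ≤ m := by
    refine (dist_le ((tp hT u v).drop m)).trans ?_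
    simp; omega
  have h3 := hT.connected.dist_triangle (u := u) (v := c) (w := v)
  rw [dist_comm (u := u) (v := c)] at h3
  have huc : T.dist c u = m := by omega
  have hvc : T.dist c v = m := by omega
  have hb : br hT c u ≠ br hT c v := by
    intro h
    have := dist_of_br_eq hT (c := c) (x := u) (y := v)
      (by intro h; rw [← h, dist_self] at huc; omega)
      (by intro h; rw [← h, dist_self] at hvc; omega) h
    omega
  refine ⟨c, u, v, fun w => ?_, huc, hvc, hb⟩
  by_cases hw : br hT c w = br hT c u
  · have := dist_of_br_ne hT (c := c) (x := w) (y := v) (hw ▸ hb)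
    have := hle w v
    omega
  · have := dist_of_br_ne hT hw
    have := hle w u
    omega

lemma path_of_seq (g : ℕ → V) (L : ℕ) (hadj : ∀ t < L, T.Adj (g t) (g (t + 1)))
    (hinj : ∀ s ≤ L, ∀ t ≤ L, g s = g t → s = t) :
    ∃ p : T.Walk (g 0) (g L), p.IsPath ∧ p.length = L ∧ ∀ t ≤ L, p.getVert t = g t := by
  have : ∃ p : T.Walk (g 0) (g L), p.length = L ∧ ∀ t ≤ L, p.getVert t = g t := by
    clear hinj
    induction L with
    | zero => exact ⟨Walk.nil, by simp, by simp⟩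
    | succ L ih =>
      obtain ⟨p, hl, hg⟩ := ih (fun t ht => hadj t (by omega))
      refine ⟨p.concat (hadj L (by omega)), by simp [hl], fun t ht => ?_⟩
      rw [Walk.concat_eq_append, Walk.getVert_append]
      split_ifs with h
      · exact hg t (hl ▸ h.le)
      · have : t = L ∨ t = L + 1 := by omega
        rcases this with rfl | rfl <;> simp [hl]
  obtain ⟨p, hl, hg⟩ := this
  refine ⟨p, ?_, hl, hg⟩
  rw [← Walk.IsPath.getVert_injOn_iff]
  intro s hs t ht h
  simp only [Set.mem_ofPred_eq, hl] at hs ht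
  rw [hg s hs, hg t ht] at h
  exact hinj s hs t ht h

lemma leaf_of_far (hT : T.IsTree) {c x : V} {m : ℕ} (hm : 1 ≤ m) (hc : ∀ w, T.dist c w ≤ m)
    (hx : T.dist c x = m) : IsLeaf T x := by
  classical
  have hxc : c ≠ x := by rintro rfl; simp at hx; omega
  unfold IsLeaf
  rw [Set.ncard_eq_one]
  refine ⟨(tp hT c x).penultimate, ?_⟩
  ext w
  simp only [mem_neighborSet, Set.mem_singleton_iff]
  constructor
  · intro h
    have hns : x ∉ (tp hT c w).support := by
      intro hmem
      have h1 := path_length hT ((tp_path hT c w).takeUntil hmem)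
      have h2 := Walk.length_takeUntil_lt_length hmem h.ne
      have h3 := hc w
      rw [tp_length] at h2
      omega
    have := path_eq hT ((tp_path hT c w).concat hns h.symm)
    rw [← this, Walk.penultimate_concat]
  · rintro rfl
    exact (Walk.adj_penultimate (Walk.not_nil_of_ne hxc)).symm

/-- legs: the branch and depth of path vertices -/
lemma leg (hT : T.IsTree) {c x : V} {j : ℕ} (hj : j ≤ T.dist c x) :
    T.dist c ((tp hT c x).getVert j) = j := by
  have := path_length hT ((tp_path hT c x).take j)
  rw [← this, Walk.take_length, tp_length]
  omega

lemma leg_br (hT : T.IsTree) {c x : V} {j : ℕ} (hj : j ≤ T.dist c x) (h0 : 1 ≤ j) :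
    br hT c ((tp hT c x).getVert j) = br hT c x := by
  apply br_of_mem
  · intro h
    have := leg hT hj
    rw [h, dist_self] at this
    omega
  · exact Walk.getVert_mem_support _ _

end tree

section count
variable {V : Type} [Fintype V] [DecidableEq V] {G : SimpleGraph V} {k : ℕ} {D : Finset V}
  {b : V → V}

lemma mdi_eq (hfar : ∀ u v, k + 1 ≤ G.dist u v ↔ u ∈ D ∧ v ∈ D ∧ b u ≠ b v)
    (hne : D.Nonempty) :
    mdi G k = (Dᶜ).card + ∏ i ∈ D.image b, (D.filter (b · = i)).card := by
  let Φ : ((i : (D.image b : Finset V)) → {x // x ∈ D ∧ b x = i}) → Set V :=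
    fun σ => Set.range (fun i => (σ i).1)
  have hΦ : Function.Injective Φ := by
    intro σ τ h
    funext i
    have : (σ i).1 ∈ Φ τ := by rw [← h]; exact ⟨i, rfl⟩
    obtain ⟨j, hj⟩ := this
    have hij : j = i := by
      apply Subtype.ext
      rw [← (σ i).2.2, ← (τ j).2.2]
      exact congrArg b hj
    subst hij
    exact Subtype.ext hj.symm
  obtain ⟨y0, hy0⟩ := hne
  let i0 : (D.image b : Finset V) := ⟨b y0, Finset.mem_image_of_mem b hy0⟩
  have key : {J : Set V | MaxDkIndep G k J} =
      (fun v => ({v} : Set V)) '' ((Dᶜ : Finset V) : Set V) ∪ Set.range Φ := by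
    ext J
    constructor
    · rintro ⟨hJ, hmax⟩
      by_cases h : ∃ v ∈ J, v ∉ D
      · obtain ⟨v, hv, hvD⟩ := h
        left
        refine ⟨v, by simpa using hvD, ?_⟩
        ext w
        simp only [Set.mem_singleton_iff]
        constructor
        · rintro rfl; exact hv
        · intro hw
          by_contra hwv
          exact hvD ((hfar _ _).1 (hJ hw hv hwv)).2.1
      · push Not at h
        right
        have hex : ∀ i : (D.image b : Finset V), ∃ x : {x // x ∈ D ∧ b x = i}, x.1 ∈ J := by
          rintro ⟨i, hi⟩
          obtain ⟨y, hy, rfl⟩ := Finset.mem_image.1 hi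
          by_contra hcon
          push Not at hcon
          have hno : ∀ x ∈ J, b x ≠ b y := fun x hx hxy => hcon ⟨x, h x hx, hxy⟩ hx
          have hind : DkIndep G k (insert y J) := by
            rintro u (rfl | hu) v (rfl | hv) huv
            · exact absurd rfl huv
            · exact (hfar _ _).2 ⟨hy, h v hv, (hno v hv).symm⟩
            · exact (hfar _ _).2 ⟨h u hu, hy, hno u hu⟩
            · exact hJ hu hv huv
          have := hmax _ hind (Set.subset_insert _ _)
          exact hno y (this ▸ Set.mem_insert y J) rfl
        choose σ hσ using hex
        refine ⟨σ, ?_⟩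
        ext x
        constructor
        · rintro ⟨i, rfl⟩; exact hσ i
        · intro hx
          refine ⟨⟨b x, Finset.mem_image_of_mem b (h x hx)⟩, ?_⟩
          by_contra hcon
          exact ((hfar _ _).1 (hJ (hσ _) hx hcon)).2.2 (σ _).2.2
    · rintro (⟨v, hv, rfl⟩ | ⟨σ, rfl⟩)
      · have hv : v ∉ D := by simpa using hv
        refine ⟨?_, ?_⟩
        · rintro u rfl w rfl h
          exact absurd rfl h
        · intro J' hJ' hs
          have hvJ : v ∈ J' := hs rfl
          ext w
          simp only [Set.mem_singleton_iff]
          constructor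
          · intro hw
            by_contra hwv
            exact hv ((hfar _ _).1 (hJ' hw hvJ hwv)).2.1
          · rintro rfl; exact hvJ
      · refine ⟨?_, ?_⟩
        · rintro u ⟨i, rfl⟩ w ⟨j, rfl⟩ h
          refine (hfar _ _).2 ⟨(σ i).2.1, (σ j).2.1, ?_⟩
          simp only [(σ i).2.2, (σ j).2.2]
          intro hij
          have : i = j := Subtype.ext hij
          subst this
          exact h rfl
        · intro J' hJ' hs
          refine Set.Subset.antisymm ?_ hs
          intro w hw
          by_contra hwn
          have hne : ∀ i, (σ i).1 ≠ w := fun i hi => hwn ⟨i, hi⟩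
          have hwD := ((hfar _ _).1 (hJ' (hs ⟨i0, rfl⟩) hw (hne i0))).2.1
          exact ((hfar _ _).1 (hJ' (hs ⟨⟨b w, Finset.mem_image_of_mem b hwD⟩, rfl⟩) hw
            (hne _))).2.2 (σ _).2.2
  unfold mdi
  rw [key, Set.ncard_union_eq, Set.ncard_image_of_injective _ Set.singleton_injective,
    Set.ncard_coe_finset, ← Set.image_univ, Set.ncard_image_of_injective _ hΦ, Set.ncard_univ,
    Nat.card_pi]
  · congr 1
    rw [← Finset.prod_coe_sort (D.image b) (fun i => (D.filter (b · = i)).card)]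
    refine Finset.prod_congr rfl fun i _ => ?_
    rw [Nat.card_eq_fintype_card, Fintype.card_subtype]
    congr 1
    ext x
    simp
  · rw [Set.disjoint_left]
    rintro _ ⟨v, hv, rfl⟩ ⟨σ, hσ⟩
    have hv : v ∉ D := by simpa using hv
    have : (σ i0).1 ∈ ({v} : Set V) := by
      have hσ : Φ σ = {v} := hσ
      rw [← hσ]; exact ⟨i0, rfl⟩
    rw [Set.mem_singleton_iff] at this
    exact hv (this ▸ (σ i0).2.1)

lemma prod_one_iff {B : Finset V} {a : V → ℕ} (ha : ∀ i ∈ B, 1 ≤ a i) :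
    1 ≤ ∏ i ∈ B, a i ∧ (∏ i ∈ B, a i = 1 ↔ ∀ i ∈ B, a i = 1) :=
  ⟨Finset.one_le_prod' ha, by simp [Finset.prod_eq_one_iff]⟩

lemma prod_sum (B : Finset V) (a : V → ℕ) (ha : ∀ i ∈ B, 1 ≤ a i) :
    ∑ i ∈ B, a i + 1 ≤ ∏ i ∈ B, a i + B.card ∧
    (∑ i ∈ B, a i + 1 = ∏ i ∈ B, a i + B.card ↔
      ∀ i ∈ B, ∀ j ∈ B, 1 < a i → 1 < a j → i = j) := by
  induction B using Finset.induction_on with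
  | empty => simp
  | insert x B hx ih =>
    have haB : ∀ i ∈ B, 1 ≤ a i := fun i hi => ha i (Finset.mem_insert_of_mem hi)
    obtain ⟨h1, h2⟩ := ih haB
    obtain ⟨h3, h4⟩ := prod_one_iff haB
    have hax := ha x (Finset.mem_insert_self _ _)
    rw [Finset.sum_insert hx, Finset.prod_insert hx, Finset.card_insert_of_notMem hx]
    have hiff : (∀ i ∈ insert x B, ∀ j ∈ insert x B, 1 < a i → 1 < a j → i = j) ↔
        (∀ i ∈ B, ∀ j ∈ B, 1 < a i → 1 < a j → i = j) ∧ (a x = 1 ∨ ∀ i ∈ B, a i = 1) := by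
      constructor
      · intro h
        refine ⟨fun i hi j hj => h i (Finset.mem_insert_of_mem hi) j
          (Finset.mem_insert_of_mem hj), ?_⟩
        by_contra! hcon
        obtain ⟨hx1, i, hi, hi1⟩ := hcon
        have := haB i hi
        have := h x (Finset.mem_insert_self _ _) i (Finset.mem_insert_of_mem hi) (by omega)
          (by omega)
        exact hx (this ▸ hi)
      · rintro ⟨h, h'⟩ i hi j hj hi1 hj1
        rcases Finset.mem_insert.1 hi with hi' | hi' <;>
          rcases Finset.mem_insert.1 hj with hj' | hj'
        · rw [hi', hj']
        · rcases h' with h' | h'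
          · rw [hi'] at hi1; omega
          · have := h' j hj'; omega
        · rcases h' with h' | h'
          · rw [hj'] at hj1; omega
          · have := h' i hi'; omega
        · exact h i hi' j hj' hi1 hj1
    rw [hiff, ← h2, ← h4]
    generalize ∏ i ∈ B, a i = P at *
    generalize ∑ i ∈ B, a i = S at *
    obtain ⟨e, he⟩ := Nat.exists_eq_add_of_le hax
    obtain ⟨P', rfl⟩ := Nat.exists_eq_add_of_le h3
    rw [he]
    have hexp : (1 + e) * (1 + P') = 1 + e + P' + e * P' := by ring
    rw [hexp]
    refine ⟨by omega, ?_, ?_⟩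
    · intro h
      have h0 : e * P' = 0 := by omega
      refine ⟨by omega, ?_⟩
      rcases Nat.mul_eq_zero.1 h0 with h | h <;> omega
    · rintro ⟨h, h'⟩
      have h0 : e * P' = 0 := by
        rcases h' with h' | h'
        · have : e = 0 := by omega
          simp [this]
        · have : P' = 0 := by omega
          simp [this]
      omega

lemma ball_eq_iff (hfar : ∀ u v, k + 1 ≤ G.dist u v ↔ u ∈ D ∧ v ∈ D ∧ b u ≠ b v)
    {u v : V} (hu : u ∈ D) (hv : v ∈ D) (huv : b u ≠ b v) {x y : V} (hx : x ∈ D) :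
    ball G k x = ball G k y ↔ y ∈ D ∧ b x = b y := by
  have hmem : ∀ x z, z ∈ ball G k x ↔ ¬ (x ∈ D ∧ z ∈ D ∧ b x ≠ b z) := by
    intro x z
    rw [← hfar]
    show G.dist x z ≤ k ↔ _
    omega
  constructor
  · intro h
    have hz : ∃ z ∈ D, b x ≠ b z := by
      by_cases hb : b x = b u
      · exact ⟨v, hv, hb ▸ huv⟩
      · exact ⟨u, hu, hb⟩
    obtain ⟨z, hz, hbz⟩ := hz
    have h1 : z ∉ ball G k x := by rw [hmem]; simp [hx, hz, hbz]
    rw [h, hmem, not_not] at h1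
    refine ⟨h1.1, ?_⟩
    by_contra hb
    have h2 : y ∉ ball G k x := by rw [hmem]; simp [hx, h1.1, hb]
    apply h2
    rw [h, hmem]
    simp
  · rintro ⟨hy, hb⟩
    ext z
    rw [hmem, hmem, hb]
    simp [hx, hy]

lemma special_iff (hfar : ∀ u v, k + 1 ≤ G.dist u v ↔ u ∈ D ∧ v ∈ D ∧ b u ≠ b v)
    {u v : V} (hu : u ∈ D) (hv : v ∈ D) (huv : b u ≠ b v)
    (hleaf : ∀ x, IsDiametralLeaf G x ↔ x ∈ D) :
    (∀ x y, ¬ KSpecial G k x y) ↔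
      ∀ i ∈ D.image b, ∀ j ∈ D.image b, 1 < (D.filter (b · = i)).card →
        1 < (D.filter (b · = j)).card → i = j := by
  have htwin : ∀ x ∈ D, (KTwin G k x ↔ 1 < (D.filter (b · = b x)).card) := by
    intro x hx
    rw [Finset.one_lt_card_iff_nontrivial]
    constructor
    · rintro ⟨y, hyx, hy⟩
      rw [ball_eq_iff hfar hu hv huv hx] at hy
      exact ⟨y, by simp [hy.1, hy.2], x, by simp [hx], hyx⟩
    · intro h
      obtain ⟨y, hy, hyx⟩ := h.exists_ne x
      rw [Finset.mem_filter] at hy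
      exact ⟨y, hyx, (ball_eq_iff hfar hu hv huv hx).2 ⟨hy.1, hy.2.symm⟩⟩
  constructor
  · intro h i hi j hj h1 h2
    obtain ⟨x, hx, rfl⟩ := Finset.mem_image.1 hi
    obtain ⟨y, hy, rfl⟩ := Finset.mem_image.1 hj
    by_contra hne
    exact h x y ⟨(hleaf x).2 hx, (hleaf y).2 hy, (htwin x hx).2 h1, (htwin y hy).2 h2,
      fun he => hne ((ball_eq_iff hfar hu hv huv hx).1 he).2⟩
  · rintro h x y ⟨h1, h2, h3, h4, h5⟩
    have hx := (hleaf x).1 h1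
    have hy := (hleaf y).1 h2
    exact h5 ((ball_eq_iff hfar hu hv huv hx).2 ⟨hy, h _ (Finset.mem_image_of_mem b hx) _
      (Finset.mem_image_of_mem b hy) ((htwin x hx).1 h3) ((htwin y hy).1 h4)⟩)

end count

section spid
variable {V : Type} {T : SimpleGraph V}

lemma adj0 {p m : ℕ} (i : Fin p) (h : 0 < m) : (spider p m).Adj none (some (i, ⟨0, h⟩)) := by
  simp [spider, SimpleGraph.fromRel_adj]

lemma adjs {p m : ℕ} (i : Fin p) (j : ℕ) (h : j + 1 < m) :
    (spider p m).Adj (some (i, ⟨j, by omega⟩)) (some (i, ⟨j + 1, h⟩)) := by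
  simp [spider, SimpleGraph.fromRel_adj]

lemma spider_leg (hT : T.IsTree) {p m : ℕ} (hm : 0 < m) (f : Option (Fin p × Fin m) → V)
    (hf : Function.Injective f) (hadj : ∀ a b, (spider p m).Adj a b → T.Adj (f a) (f b))
    (i : Fin p) :
    T.dist (f none) (f (some (i, ⟨m - 1, by omega⟩))) = m ∧
      br hT (f none) (f (some (i, ⟨m - 1, by omega⟩))) = f (some (i, ⟨0, hm⟩)) := by
  let g : ℕ → V := fun t =>
    if h : 0 < t ∧ t ≤ m then f (some (i, ⟨t - 1, by omega⟩)) else f none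
  have g0 : g 0 = f none := by simp [g]
  have gs : ∀ t (h : t < m), g (t + 1) = f (some (i, ⟨t, h⟩)) := by
    intro t h
    have : 0 < t + 1 ∧ t + 1 ≤ m := by omega
    simp only [g, dif_pos this]
    rfl
  obtain ⟨P, hP, hl, hg⟩ := path_of_seq (T := T) g m (by
    intro t ht
    rw [gs t ht]
    rcases t with _ | t
    · rw [g0]; exact hadj _ _ (adj0 i _)
    · rw [gs t (by omega)]; exact hadj _ _ (adjs i t ht)) (by
    intro s hs t ht h
    rcases s with _ | s <;> rcases t with _ | t
    · rfl
    · rw [g0, gs t (by omega)] at h; exact absurd (hf h) (by simp)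
    · rw [g0, gs s (by omega)] at h; exact absurd (hf h) (by simp)
    · rw [gs s (by omega), gs t (by omega)] at h
      have := hf h
      simp at this
      omega)
  have gm : g m = f (some (i, ⟨m - 1, by omega⟩)) := by
    rw [← gs (m - 1) (by omega)]
    congr 1; omega
  rw [← gm, ← g0, ← gs 0 hm]
  refine ⟨by rw [← path_length hT hP, hl], ?_⟩
  unfold br
  rw [← path_eq hT hP]
  exact hg 1 hm

lemma spider_le [Fintype V] [DecidableEq V] (hT : T.IsTree) {c : V} {p m : ℕ} (hm : 0 < m)
    (hp : 2 ≤ p) (hc : ∀ w, T.dist c w ≤ m)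
    (h : ContainsSub T (spider p m)) :
    p ≤ ((Finset.univ.filter (fun v => T.dist c v = m)).image (br hT c)).card := by
  obtain ⟨f, hf, hadj⟩ := h
  let l : Fin p → V := fun i => f (some (i, ⟨m - 1, by omega⟩))
  have hl := spider_leg hT hm f hf hadj
  have hdist : ∀ i j, i ≠ j → T.dist (l i) (l j) = 2 * m := by
    intro i j hij
    rw [dist_of_br_ne hT (c := f none), (hl i).1, (hl j).1]
    · ring
    · simp only [l]
      rw [(hl i).2, (hl j).2]
      intro h
      have := hf h
      simp at this
      exact hij this
  have hlc : ∀ i, T.dist c (l i) = m := by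
    intro i
    obtain ⟨j, hj⟩ : ∃ j : Fin p, i ≠ j := by
      haveI : Nontrivial (Fin p) := Fin.nontrivial_iff_two_le.2 hp
      obtain ⟨j, hj⟩ := exists_ne i
      exact ⟨j, hj.symm⟩
    have h1 := hdist i j hj
    have h2 := hT.connected.dist_triangle (u := l i) (v := c) (w := l j)
    rw [dist_comm (u := l i) (v := c)] at h2
    have := hc (l i)
    have := hc (l j)
    omega
  have hne : ∀ i, l i ≠ c := by
    intro i h
    have := hlc i
    rw [h, dist_self] at this
    omega
  have hinj : Function.Injective (fun i => br hT c (l i)) := by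
    intro i j h
    by_contra hij
    have := dist_of_br_eq hT (hne i) (hne j) h
    rw [hdist i j hij, hlc, hlc] at this
    omega
  calc p = (Finset.univ.image (fun i => br hT c (l i))).card := by
        rw [Finset.card_image_of_injective _ hinj]; simp
    _ ≤ _ := by
        apply Finset.card_le_card
        intro x hx
        simp only [Finset.mem_image, Finset.mem_univ, true_and] at hx
        obtain ⟨i, rfl⟩ := hx
        exact Finset.mem_image_of_mem _ (by simp [hlc])

lemma spider_sub [Fintype V] [DecidableEq V] (hT : T.IsTree) (c : V) {q m : ℕ} 
    (hq : ((Finset.univ.filter (fun v => T.dist c v = m)).image (br hT c)).card = q) :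
    ContainsSub T (spider q m) := by
  set B := (Finset.univ.filter (fun v => T.dist c v = m)).image (br hT c) with hB
  let e : Fin q ≃ B := (B.equivFinOfCardEq hq).symm
  have hex : ∀ i : Fin q, ∃ x, T.dist c x = m ∧ br hT c x = e i := by
    intro i
    obtain ⟨x, hx, h⟩ := Finset.mem_image.1 (e i).2
    exact ⟨x, by simpa using hx, h⟩
  choose x hx hbx using hex
  let f : Option (Fin q × Fin m) → V := fun o =>
    match o with
    | none => c
    | some (i, j) => (tp hT c (x i)).getVert (j + 1)
  have hfd : ∀ i j, T.dist c (f (some (i, j))) = j + 1 := fun i j =>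
    leg hT (by rw [hx]; omega)
  have hfb : ∀ i j, br hT c (f (some (i, j))) = e i := fun i j =>
    (leg_br hT (by rw [hx]; omega) (by omega)).trans (hbx i)
  have hrel : ∀ i i' j j', i = i' → (j : Fin m).val + 1 = (j' : Fin m).val →
      T.Adj (f (some (i, j))) (f (some (i', j'))) := by
    rintro i _ j j' rfl h
    simp only [f]
    rw [← h]
    apply Walk.adj_getVert_succ
    rw [tp_length, hx]
    omega
  have hrel0 : ∀ i (j : Fin m), j.val = 0 → T.Adj c (f (some (i, j))) := by
    intro i j h
    simp only [f, h]
    have := Walk.adj_getVert_succ (tp hT c (x i)) (i := 0) (by rw [tp_length, hx]; omega)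
    simpa using this
  refine ⟨f, ?_, ?_⟩
  · rintro (_ | ⟨i, j⟩) (_ | ⟨i', j'⟩) h
    · rfl
    · have := hfd i' j'
      rw [← h] at this
      simp [f] at this
    · have := hfd i j
      rw [h] at this
      simp [f] at this
    · have h1 := hfd i j
      rw [h, hfd] at h1
      have h2 := hfb i j
      rw [h, hfb] at h2
      have h3 : i' = i := e.injective (Subtype.ext h2)
      have h4 : j' = j := by omega
      rw [h3, h4]
  · rintro (_ | ⟨i, j⟩) (_ | ⟨i', j'⟩) h
    · exact absurd rfl h.ne
    · simp [spider, SimpleGraph.fromRel_adj] at h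
      exact hrel0 _ _ h
    · simp [spider, SimpleGraph.fromRel_adj] at h
      exact (hrel0 _ _ h).symm
    · simp only [spider, SimpleGraph.fromRel_adj] at h
      rcases h.2 with h | h
      · exact hrel _ _ _ _ h.1 h.2
      · exact (hrel _ _ _ _ h.1 h.2).symm

end spid
end Stmt15

/-- Let `k ≥ 3` be odd and let `T` be a tree on `n` vertices of diameter
`k + 1`, where `n = p(⌊k/2⌋+1) + r + 1` with `p ≥ 2`, `0 ≤ r ≤ ⌊k/2⌋`. Then
`mdi_k(T) ≥ f_k(n)`, with equality iff `T` contains a subtree isomorphic to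
`S_{p,⌊k/2⌋+1}` and `T` contains no `k`-special pair. -/
theorem stmt_15 (k : ℕ) (hk : 3 ≤ k) (hodd : Odd k) (p r : ℕ) (hp : 2 ≤ p)
    (hr : r ≤ k / 2) {V : Type} [Fintype V] {n : ℕ} (hn : Fintype.card V = n)
    (hnval : n = p * (k / 2 + 1) + r + 1)
    (T : SimpleGraph V) (hT : T.IsTree) (hdiam : gdiam T = k + 1) :
    fk k n ≤ mdi T k ∧
    (mdi T k = fk k n ↔
      ContainsSub T (spider p (k / 2 + 1)) ∧ ∀ x y, ¬ KSpecial T k x y) := by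
  classical
  obtain ⟨s, hs⟩ := hodd
  obtain ⟨m, hm⟩ : ∃ m, m = k / 2 + 1 := ⟨_, rfl⟩
  rw [← hm] at hnval ⊢
  have hkm : k + 1 = 2 * m := by omega
  have hm1 : 1 ≤ m := by omega
  obtain ⟨c, u, v, hc, hu, hv, huv⟩ := Stmt15.exists_center hT hm1 (hdiam.trans hkm)
  let D : Finset V := Finset.univ.filter (fun v => T.dist c v = m)
  have hD : ∀ x, x ∈ D ↔ T.dist c x = m := by simp [D]
  let b := Stmt15.br hT c
  have hne : ∀ x, T.dist c x = m → x ≠ c := by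
    rintro x hx rfl
    rw [SimpleGraph.dist_self] at hx
    omega
  have hfar : ∀ u v, k + 1 ≤ T.dist u v ↔ u ∈ D ∧ v ∈ D ∧ b u ≠ b v := by
    intro u v
    rw [hD, hD]
    constructor
    · intro h
      have h2 := hT.connected.dist_triangle (u := u) (v := c) (w := v)
      rw [SimpleGraph.dist_comm (u := u) (v := c)] at h2
      have := hc u
      have := hc v
      have hu : T.dist c u = m := by omega
      have hv : T.dist c v = m := by omega
      refine ⟨hu, hv, fun hb => ?_⟩
      have := Stmt15.dist_of_br_eq hT (hne u hu) (hne v hv) hb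
      omega
    · rintro ⟨h1, h2, h3⟩
      have := Stmt15.dist_of_br_ne hT h3
      omega
  have huD := (hD u).2 hu
  have hvD := (hD v).2 hv
  have hleaf : ∀ x, IsDiametralLeaf T x ↔ x ∈ D := by
    intro x
    constructor
    · rintro ⟨-, h⟩
      obtain ⟨z, -, hz⟩ := Finset.exists_mem_eq_sup Finset.univ ⟨x, Finset.mem_univ x⟩ (T.dist x)
      have : ecc T x = T.dist x z := hz
      exact ((hfar x z).1 (by omega)).1
    · intro hx
      refine ⟨Stmt15.leaf_of_far hT hm1 hc ((hD x).1 hx), ?_⟩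
      apply le_antisymm (Finset.le_sup (f := ecc T) (Finset.mem_univ x))
      show gdiam T ≤ ecc T x
      rw [hdiam]
      have hz : ∃ z ∈ D, b x ≠ b z := by
        by_cases hb : b x = b u
        · exact ⟨v, hvD, hb ▸ huv⟩
        · exact ⟨u, huD, hb⟩
      obtain ⟨z, hz, hbz⟩ := hz
      exact ((hfar x z).2 ⟨hx, hz, hbz⟩).trans
        (Finset.le_sup (f := T.dist x) (Finset.mem_univ z))
  have hmdi := Stmt15.mdi_eq hfar ⟨u, huD⟩
  rw [Stmt15.special_iff hfar huD hvD huv hleaf]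
  obtain ⟨hps, hpe⟩ := Stmt15.prod_sum (D.image b) (fun i => (D.filter (b · = i)).card) (by
    intro i hi
    obtain ⟨x, hx, rfl⟩ := Finset.mem_image.1 hi
    exact Finset.card_pos.2 ⟨x, by simp [hx]⟩)
  rw [← hpe]
  have hsum : D.card = ∑ i ∈ D.image b, (D.filter (b · = i)).card :=
    Finset.card_eq_sum_card_image b D
  have hDc := Finset.card_add_card_compl D
  rw [hn] at hDc
  have hsub := Stmt15.spider_sub hT c (m := m) rfl
  have hqle : (D.image b).card ≤ p := by
    obtain ⟨f, hf, -⟩ := hsub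
    have h1 := Fintype.card_le_of_injective f hf
    simp only [Fintype.card_option, Fintype.card_prod, Fintype.card_fin] at h1
    rw [hn, hnval] at h1
    have h1 : (D.image b).card * m + 1 ≤ p * m + r + 1 := h1
    by_contra hcon
    have : (p + 1) * m ≤ (D.image b).card * m := Nat.mul_le_mul_right _ (by omega)
    rw [Nat.add_mul] at this
    omega
  have hspid : ContainsSub T (spider p m) ↔ (D.image b).card = p := by
    constructor
    · intro h
      exact le_antisymm hqle (Stmt15.spider_le hT hm1 hp hc h)
    · intro h
      rw [← h]
      exact hsub
  rw [hspid]
  have hpm : 2 * m ≤ p * m := Nat.mul_le_mul_right _ hp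
  have hppm : p * 1 ≤ p * m := Nat.mul_le_mul_left _ hm1
  have hdiv : (n - k % 2) / m = p := by
    have : n - k % 2 = r + p * m := by
      have : k % 2 = 1 := by omega
      omega
    rw [this, Nat.add_mul_div_right _ _ hm1, Nat.div_eq_of_lt (by omega), zero_add]
  have hfk : fk k n = n - p + 1 := by
    unfold fk
    rw [if_neg (by omega), ← hm, hdiv]
  rw [hfk, hmdi]
  rw [hsum] at hDc
  beta_reduce at hps ⊢
  generalize (∏ i ∈ D.image b, (D.filter (b · = i)).card) = P at *
  generalize (∑ i ∈ D.image b, (D.filter (b · = i)).card) = S at *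
  generalize (D.image b).card = q at *
  refine ⟨by omega, ?_⟩
  constructor
  · intro h
    constructor <;> omega
  · rintro ⟨h1, h2⟩
    omega
end

section
/- Let k ≥ 3 be odd, let p ≥ 2, and let T be a tree on n = p·(⌊k/2⌋+1) + 1 vertices of diameter exactly k + 2. Then mdi_k(T) > f_k(n). -/
lemma aux_geo {V : Type*} {G : SimpleGraph V} {u v x : V} (P : G.Walk u v)
    (hP : P.length = G.dist u v) (hx : x ∈ P.support) (hc : G.Connected) :
    G.dist u x + G.dist x v = G.dist u v := by
  classical
  have h1 := congrArg SimpleGraph.Walk.length (P.take_spec hx)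
  rw [SimpleGraph.Walk.length_append] at h1
  have h2 := SimpleGraph.dist_le (P.takeUntil x hx)
  have h3 := SimpleGraph.dist_le (P.dropUntil x hx)
  have h4 := hc.dist_triangle (u := u) (v := x) (w := v)
  omega

lemma aux_mid {V : Type*} {G : SimpleGraph V} (hc : G.Connected) (u v : V) (i : ℕ)
    (hi : i ≤ G.dist u v) : ∃ z, G.dist u z = i ∧ G.dist z v = G.dist u v - i := by
  obtain ⟨P, hP⟩ := hc.exists_walk_length_eq_dist u v
  refine ⟨P.getVert i, ?_⟩
  have h2 := SimpleGraph.dist_le (P.take i)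
  have h3 := SimpleGraph.dist_le (P.drop i)
  rw [SimpleGraph.Walk.take_length] at h2
  rw [SimpleGraph.Walk.drop_length] at h3
  have h4 := hc.dist_triangle (u := u) (v := P.getVert i) (w := v)
  omega

lemma aux_reach {V : Type*} {G : SimpleGraph V} (hc : G.Connected) {a b v : V} (hab : G.Adj a b)
    (h : G.dist v a ≤ G.dist v b) : (G.deleteEdges {s(a, b)}).Reachable v a := by
  rw [SimpleGraph.reachable_deleteEdges_iff_exists_walk]
  obtain ⟨P, hP⟩ := hc.exists_walk_length_eq_dist v a
  refine ⟨P, fun he => ?_⟩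
  have hb : b ∈ P.support := P.snd_mem_support_of_mem_edges he
  have h1 := aux_geo P hP hb hc
  have h2 : G.dist b a = 1 := SimpleGraph.dist_eq_one_iff_adj.2 hab.symm
  omega

lemma aux_side {V : Type*} {G : SimpleGraph V} (hT : G.IsTree) {a b : V} (hab : G.Adj a b)
    (v : V) : G.dist v b = G.dist v a + 1 ∨ G.dist v a = G.dist v b + 1 := by
  have hc := hT.1
  have hbr := SimpleGraph.isAcyclic_iff_forall_isBridge.1 hT.2 (e := s(a, b)) hab
  rw [SimpleGraph.isBridge_iff] at hbr
  have h2 : G.dist a b = 1 := SimpleGraph.dist_eq_one_iff_adj.2 hab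
  have h3 := hc.dist_triangle (u := v) (v := a) (w := b)
  have h4 := hc.dist_triangle (u := v) (v := b) (w := a)
  rw [SimpleGraph.dist_comm (u := b)] at h4
  by_contra hcon
  have h5 := aux_reach hc hab (v := v) (by omega)
  have h6 := aux_reach hc hab.symm (v := v) (by omega)
  rw [Sym2.eq_swap] at h6
  exact hbr (h5.symm.trans h6)

lemma aux_cross {V : Type*} {G : SimpleGraph V} (hT : G.IsTree) {a b : V} (hab : G.Adj a b)
    {v w : V} (hv : G.dist v b = G.dist v a + 1) (hw : G.dist w a = G.dist w b + 1) :
    G.dist v w = G.dist v a + 1 + G.dist w b := by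
  have hc := hT.1
  have hbr := SimpleGraph.isAcyclic_iff_forall_isBridge.1 hT.2 (e := s(a, b)) hab
  rw [SimpleGraph.isBridge_iff] at hbr
  have h5 := aux_reach hc hab (v := v) (by omega)
  have h6 := aux_reach hc hab.symm (v := w) (by omega)
  rw [Sym2.eq_swap] at h6
  obtain ⟨P, hP⟩ := hc.exists_walk_length_eq_dist v w
  by_cases he : s(a, b) ∈ P.edges
  · have ha : a ∈ P.support := P.fst_mem_support_of_mem_edges he
    have h1 := aux_geo P hP ha hc
    rw [SimpleGraph.dist_comm (u := a) (v := w)] at h1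
    omega
  · have h7 : (G.deleteEdges {s(a, b)}).Reachable v w :=
      SimpleGraph.reachable_deleteEdges_iff_exists_walk.2 ⟨P, he⟩
    exact absurd (h5.symm.trans (h7.trans h6)) hbr

lemma aux_trans {V : Type*} {G : SimpleGraph V} (hT : G.IsTree) {a u x w : V} {s : ℕ}
    (hs : 1 ≤ s) (hu : G.dist u a = s) (hx : G.dist x a = s) (hw : G.dist w a = s)
    (h1 : G.dist u x < 2 * s) (h2 : G.dist w x < 2 * s) : G.dist u w < 2 * s := by
  have hc := hT.1
  obtain ⟨c, hc1, hc2⟩ := aux_mid hc x a (s - 1) (by omega)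
  have hadj : G.Adj c a := SimpleGraph.dist_eq_one_iff_adj.1 (by omega)
  have key : ∀ y, G.dist y a = s → G.dist y x < 2 * s → G.dist y c = s - 1 := by
    intro y hy hyx
    rcases aux_side hT hadj y with h | h
    · omega
    · have := aux_cross hT hadj (v := x) (w := y) (by omega) h
      rw [SimpleGraph.dist_comm] at this
      omega
  have h3 := key u hu h1
  have h4 := key w hw h2
  have h5 := hc.dist_triangle (u := u) (v := c) (w := w)
  rw [SimpleGraph.dist_comm (u := c)] at h5
  omega

lemma aux_main {V : Type*} [Finite V] {G : SimpleGraph V} (hT : G.IsTree) {s : ℕ} (hs : 1 ≤ s)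
    {a b x0 y0 : V} (hab : G.Adj a b)
    (hx0a : G.dist x0 a = s) (hx0b : G.dist x0 b = s + 1)
    (hy0a : G.dist y0 a = s + 1) (hy0b : G.dist y0 b = s)
    (hd : ∀ u v, G.dist u v ≤ 2 * s + 1) :
    ∃ R : Set V, R.Nonempty ∧ DkIndep G (2 * s - 1) R ∧
      (∀ x ∈ R, s ≤ G.dist x a ∧ s ≤ G.dist x b) ∧
      ∀ v w, 2 * s ≤ G.dist v w → ∃ x ∈ R, 2 * s ≤ G.dist v x ∧ G.dist w x < 2 * s := by
  have hc := hT.1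
  -- sides
  have hside : ∀ v, (G.dist v b = G.dist v a + 1 ∧ G.dist v a ≤ s) ∨
      (G.dist v a = G.dist v b + 1 ∧ G.dist v b ≤ s) := by
    intro v
    rcases aux_side hT hab v with h | h
    · left
      have := aux_cross hT hab h (w := y0) (by omega)
      have := hd v y0
      omega
    · right
      have := aux_cross hT hab (v := x0) (by omega) h
      have := hd x0 v
      omega
  have hcr : ∀ v w, G.dist v b = G.dist v a + 1 → G.dist w a = G.dist w b + 1 →
      G.dist v w = G.dist v a + 1 + G.dist w b := fun v w h1 h2 => aux_cross hT hab h1 h2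
  have hcr' : ∀ v w, G.dist v b = G.dist v a + 1 → G.dist w a = G.dist w b + 1 →
      G.dist w v = G.dist v a + 1 + G.dist w b := fun v w h1 h2 => by
    rw [SimpleGraph.dist_comm]; exact aux_cross hT hab h1 h2
  let L : Set V := {v | G.dist v a + G.dist v b = 2 * s + 1}
  obtain ⟨R, hRm⟩ := Set.Finite.exists_maximal
    (s := {R : Set V | R ⊆ L ∧ DkIndep G (2 * s - 1) R}) (Set.toFinite _)
    ⟨∅, by simp [DkIndep]⟩
  obtain ⟨⟨hRL, hRi⟩, hmax⟩ := hRm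
  have hdom : ∀ w ∈ L, ∃ x ∈ R, G.dist w x < 2 * s := by
    intro w hw
    by_contra! hcon
    have hin : insert w R ∈ {R : Set V | R ⊆ L ∧ DkIndep G (2 * s - 1) R} := by
      refine ⟨Set.insert_subset hw hRL, ?_⟩
      intro u hu v hv huv
      rcases hu with rfl | hu <;> rcases hv with rfl | hv
      · exact absurd rfl huv
      · have := hcon v hv; omega
      · have := hcon u hu; rw [SimpleGraph.dist_comm]; omega
      · exact hRi hu hv huv
    have := hmax hin (Set.subset_insert w R) (Set.mem_insert w R)
    have h0 := hcon w this
    simp at h0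
    omega
  have hx0L : x0 ∈ L := by change _ + _ = _; omega
  have hy0L : y0 ∈ L := by change _ + _ = _; omega
  obtain ⟨x1, hx1R, hx1⟩ := hdom x0 hx0L
  obtain ⟨y1, hy1R, hy1⟩ := hdom y0 hy0L
  have hx1L : G.dist x1 a + G.dist x1 b = 2 * s + 1 := hRL hx1R
  have hy1L : G.dist y1 a + G.dist y1 b = 2 * s + 1 := hRL hy1R
  have hx1a : G.dist x1 b = G.dist x1 a + 1 := by
    rcases hside x1 with h | h
    · exact h.1
    · have := hcr x0 x1 (by omega) h.1
      omega
  have hy1b : G.dist y1 a = G.dist y1 b + 1 := by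
    rcases hside y1 with h | h
    · have := hcr y1 y0 h.1 (by omega)
      rw [SimpleGraph.dist_comm] at this
      omega
    · exact h.1
  refine ⟨R, ⟨x1, hx1R⟩, hRi, ?_, ?_⟩
  · intro x hx
    have h1 : G.dist x a + G.dist x b = 2 * s + 1 := hRL hx
    rcases hside x with h | h <;> omega
  · intro v w hvw
    have tri : ∀ c v w, G.dist v w ≤ G.dist v c + G.dist w c := by
      intro c v w
      have := hc.dist_triangle (u := v) (v := c) (w := w)
      rwa [SimpleGraph.dist_comm (u := c)] at this
    by_cases hw : w ∈ L
    · obtain ⟨x, hxR, hx⟩ := hdom w hw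
      refine ⟨x, hxR, ?_, hx⟩
      have hxL : G.dist x a + G.dist x b = 2 * s + 1 := hRL hxR
      have hwL : G.dist w a + G.dist w b = 2 * s + 1 := hw
      by_contra! hcon
      have hta := tri a v w
      have htb := tri b v w
      rcases hside v with h1 | h1 <;> rcases hside w with h2 | h2 <;>
        rcases hside x with h3 | h3
      · have := aux_trans hT hs (a := a) (u := v) (x := x) (w := w) (by omega) (by omega)
          (by omega) hcon hx
        omega
      · have := hcr w x h2.1 h3.1
        omega
      · have := hcr' x w h3.1 h2.1
        omega
      · have := hcr v x h1.1 h3.1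
        have := hcr v w h1.1 h2.1
        omega
      · have := hcr' x v h3.1 h1.1
        have := hcr' w v h2.1 h1.1
        omega
      · have := hcr w x h2.1 h3.1
        omega
      · have := hcr' x w h3.1 h2.1
        omega
      · have := aux_trans hT hs (a := b) (u := v) (x := x) (w := w) (by omega) (by omega)
          (by omega) hcon hx
        omega
    · have hwL : G.dist w a + G.dist w b ≠ 2 * s + 1 := hw
      have hta := tri a v w
      have htb := tri b v w
      rcases hside w with h2 | h2
      · refine ⟨x1, hx1R, ?_, ?_⟩
        · have := hcr' x1 v hx1a
          have c4 := hcr' w v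
          rcases hside v with h1 | h1 <;> omega
        · have := tri a w x1
          omega
      · refine ⟨y1, hy1R, ?_, ?_⟩
        · have := fun h => hcr v y1 h hy1b
          have c4 := hcr v w
          rcases hside v with h1 | h1 <;> omega
        · have := tri b w y1
          omega

lemma aux_card {V : Type*} [Fintype V] {G : SimpleGraph V} (hc : G.Connected) {s : ℕ}
    {a b : V} (hab : a ≠ b) {R : Set V} (hRi : DkIndep G (2 * s - 1) R)
    (hR : ∀ x ∈ R, s ≤ G.dist x a ∧ s ≤ G.dist x b) :
    R.ncard * s + 2 ≤ Fintype.card V := by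
  classical
  have hz : ∀ (x : R) (i : Fin s), ∃ z, G.dist x.1 z = i := by
    intro x i
    obtain ⟨z, hz, -⟩ := aux_mid hc x.1 a i (by have := (hR x.1 x.2).1; omega)
    exact ⟨z, hz⟩
  choose z hz using hz
  let F : (R × Fin s) ⊕ Bool → V := fun t =>
    match t with
    | Sum.inl (x, i) => z x i
    | Sum.inr true => a
    | Sum.inr false => b
  have hza : ∀ x i, z x i ≠ a := by
    intro x i h
    have h1 := hz x i
    rw [h] at h1
    have := (hR x.1 x.2).1
    omega
  have hzb : ∀ x i, z x i ≠ b := by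
    intro x i h
    have h1 := hz x i
    rw [h] at h1
    have := (hR x.1 x.2).2
    omega
  have hF : Function.Injective F := by
    rintro (⟨x, i⟩ | (_ | _)) (⟨y, j⟩ | (_ | _)) h
    · change z x i = z y j at h
      have h1 := hz x i
      have h2 := hz y j
      have hxy : x = y := by
        by_contra hne
        have h3 := hRi x.2 y.2 (fun h => hne (Subtype.ext h))
        have h4 := hc.dist_triangle (u := x.1) (v := z x i) (w := y.1)
        rw [h, SimpleGraph.dist_comm (u := z y j), h2, ← h, h1] at h4
        omega
      subst hxy
      have : i = j := by
        rw [h, h2] at h1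
        exact Fin.ext h1.symm
      subst this
      rfl
    · exact absurd h (hzb x i)
    · exact absurd h (hza x i)
    · exact absurd h.symm (hzb y j)
    · rfl
    · exact absurd h.symm hab
    · exact absurd h.symm (hza y j)
    · exact absurd h hab
    · rfl
  have := Nat.card_le_card_of_injective F hF
  rw [Nat.card_sum, Nat.card_prod, Nat.card_coe_set_eq] at this
  simpa using this

lemma aux_count {V : Type*} [Fintype V] {G : SimpleGraph V} {k : ℕ}
    {R : Set V} (hRne : R.Nonempty) (hRi : DkIndep G k R)
    (hP : ∀ v w, k + 1 ≤ G.dist v w → ∃ x ∈ R, k + 1 ≤ G.dist v x ∧ G.dist w x < k + 1) :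
    Fintype.card V + 1 ≤ mdi G k + R.ncard := by
  classical
  let F : V → Set V := fun v => insert v {x ∈ R | k + 1 ≤ G.dist v x}
  have hFm : ∀ v, MaxDkIndep G k (F v) := by
    intro v
    constructor
    · intro u hu w hw huw
      rcases hu with rfl | hu <;> rcases hw with rfl | hw
      · exact absurd rfl huw
      · exact hw.2
      · rw [SimpleGraph.dist_comm]; exact hu.2
      · exact hRi hu.1 hw.1 huw
    · intro J hJ hsub
      refine Set.Subset.antisymm ?_ hsub
      intro w hw
      by_cases hwv : w = v
      · exact Or.inl hwv
      have hvJ : v ∈ J := hsub (Or.inl rfl)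
      have h1 := hJ hvJ hw (Ne.symm hwv)
      obtain ⟨x, hxR, hvx, hwx⟩ := hP v w h1
      have hxF : x ∈ F v := Or.inr ⟨hxR, hvx⟩
      by_cases hwx' : w = x
      · rw [hwx']; exact hxF
      have := hJ hw (hsub hxF) hwx'
      omega
  have hFR : ∀ v ∈ R, F v = R := by
    intro v hv
    refine Set.Subset.antisymm ?_ ?_
    · rintro x (rfl | hx)
      · exact hv
      · exact hx.1
    · intro x hx
      by_cases h : x = v
      · exact Or.inl h
      · exact Or.inr ⟨hx, hRi hv hx (Ne.symm h)⟩
  have hRm : MaxDkIndep G k R := by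
    obtain ⟨v, hv⟩ := hRne
    rw [← hFR v hv]
    exact hFm v
  have hinj : Set.InjOn F Rᶜ := by
    intro u hu v hv h
    have : u ∈ F v := h ▸ (Or.inl rfl : u ∈ F u)
    rcases this with h | h
    · exact h
    · exact absurd h.1 hu
  have hnot : R ∉ F '' Rᶜ := by
    rintro ⟨v, hv, h⟩
    exact hv (h ▸ (Or.inl rfl : v ∈ F v))
  have hsub : insert R (F '' Rᶜ) ⊆ {J : Set V | MaxDkIndep G k J} := by
    rintro J (rfl | ⟨v, -, rfl⟩)
    · exact hRm
    · exact hFm v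
  have h1 := Set.ncard_le_ncard hsub (Set.toFinite _)
  rw [Set.ncard_insert_of_notMem hnot (Set.toFinite _), hinj.ncard_image] at h1
  have h2 := Set.ncard_add_ncard_compl R
  rw [Nat.card_eq_fintype_card] at h2
  unfold mdi
  omega

/-- Let `k ≥ 3` be odd, `p ≥ 2`, and let `T` be a tree on
`n = p(⌊k/2⌋+1) + 1` vertices of diameter exactly `k + 2`. Then `mdi_k(T) > f_k(n)`. -/
theorem stmt_16 (k : ℕ) (hk : 3 ≤ k) (hodd : Odd k) (p : ℕ) (hp : 2 ≤ p)
    {V : Type} [Fintype V] {n : ℕ} (hn : Fintype.card V = n)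
    (hnval : n = p * (k / 2 + 1) + 1)
    (T : SimpleGraph V) (hT : T.IsTree) (hdiam : gdiam T = k + 2) :
    fk k n < mdi T k := by
  have hc := hT.1
  obtain ⟨s, hs, hks⟩ : ∃ s, 2 ≤ s ∧ k = 2 * s - 1 := by
    obtain ⟨r, hr⟩ := hodd
    exact ⟨r + 1, by omega, by omega⟩
  have hk2 : k / 2 + 1 = s := by omega
  have hd : ∀ u v, T.dist u v ≤ 2 * s + 1 := by
    intro u v
    have h1 : T.dist u v ≤ ecc T u := Finset.le_sup (f := T.dist u) (Finset.mem_univ v)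
    have h2 : ecc T u ≤ gdiam T := Finset.le_sup (f := ecc T) (Finset.mem_univ u)
    omega
  have hne : (Finset.univ : Finset V).Nonempty := by
    rw [Finset.univ_nonempty_iff]
    exact hc.nonempty
  obtain ⟨x0, -, hx0⟩ := Finset.exists_mem_eq_sup _ hne (ecc T)
  obtain ⟨y0, -, hy0⟩ := Finset.exists_mem_eq_sup _ hne (T.dist x0)
  have hxy : T.dist x0 y0 = 2 * s + 1 := by
    have h1 : gdiam T = ecc T x0 := hx0
    have h2 : ecc T x0 = T.dist x0 y0 := hy0
    omega
  obtain ⟨a, ha1, ha2⟩ := aux_mid hc x0 y0 s (by omega)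
  obtain ⟨b, hb1, hb2⟩ := aux_mid hc a y0 1 (by omega)
  have hab : T.Adj a b := SimpleGraph.dist_eq_one_iff_adj.1 hb1
  have t1 := hc.dist_triangle (u := x0) (v := a) (w := b)
  have t2 := hc.dist_triangle (u := x0) (v := b) (w := y0)
  obtain ⟨R, hRne, hRi, hRc, hP⟩ := aux_main hT (s := s) (by omega) (x0 := x0) (y0 := y0) hab ha1
    (by omega) (by rw [SimpleGraph.dist_comm]; omega) (by rw [SimpleGraph.dist_comm]; omega) hd
  have h1 := aux_card hc hab.ne hRi hRc
  have h2 := aux_count (k := k) hRne (hks ▸ hRi) (by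
    have : k + 1 = 2 * s := by omega
    rw [this]; exact hP)
  rw [hk2] at hnval
  have h3 : R.ncard < p := by
    by_contra! hcon
    have := Nat.mul_le_mul_right s hcon
    omega
  have h4 : 3 ≤ p := by
    by_contra! hcon
    have : p = 2 := by omega
    subst this
    -- both ends of the diametral path give too many vertices
    have hz : ∀ i : Fin (2 * s + 2), ∃ z, T.dist x0 z = i := fun i => by
      obtain ⟨z, hz, -⟩ := aux_mid hc x0 y0 i (by omega)
      exact ⟨z, hz⟩
    choose z hz using hz
    have hzi : Function.Injective z := fun i j h => by
      have := hz i
      rw [h, hz j] at this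
      exact Fin.ext this.symm
    have := Fintype.card_le_of_injective z hzi
    rw [Fintype.card_fin] at this
    omega
  have h5 : 3 * s ≤ p * s := Nat.mul_le_mul_right s h4
  have h6 : (n - k % 2) / (k / 2 + 1) = p := by
    have : n - k % 2 = p * s := by omega
    rw [this, hk2, Nat.mul_div_cancel _ (by omega)]
  have h7 : p * 2 ≤ p * s := Nat.mul_le_mul_left p hs
  unfold fk
  rw [if_neg (by omega), h6]
  omega
end

section
/- Let k ≥ 3 be odd and let n ≥ k + 2 be such that ⌊k/2⌋ + 1 divides n − 1, and set p = (n−1)/(⌊k/2⌋+1). Then an n-vertex tree T satisfies mdi_k(T) = f_k(n) if and only if T is isomorphic to S_{p,⌊k/2⌋+1}; in particular, up to isomorphism there is a unique n-vertex tree with the minimum possible number of maximal distance-k independent sets among all n-vertex trees. -/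
section AbstractPart
open Classical

variable {V : Type*}

noncomputable def aNb (R : V → V → Prop) (S : Finset V) (x : V) : Finset V := S.filter (R x)

def aSimp (R : V → V → Prop) (S : Finset V) (x : V) : Prop :=
  ∀ y ∈ S, ∀ z ∈ S, R x y → R x z → R y z

noncomputable def aSC (R : V → V → Prop) (S : Finset V) : Finset (Finset V) :=
  (S.filter (aSimp R S)).image (aNb R S)

def aInd (R : V → V → Prop) (A : Finset V) : Prop := ∀ u ∈ A, ∀ v ∈ A, R u v → u = v

noncomputable def aMIS (R : V → V → Prop) (S : Finset V) : Finset (Finset V) :=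
  S.powerset.filter (fun J => aInd R J ∧ ∀ v ∈ S, ∃ u ∈ J, R u v)

lemma aMem_SC {R : V → V → Prop} {S D : Finset V} :
    D ∈ aSC R S ↔ ∃ y ∈ S, aSimp R S y ∧ aNb R S y = D := by
  simp [aSC, and_assoc]

lemma aMem_MIS {R : V → V → Prop} {S J : Finset V} :
    J ∈ aMIS R S ↔ J ⊆ S ∧ aInd R J ∧ ∀ v ∈ S, ∃ u ∈ J, R u v := by
  simp [aMIS]

lemma aMem_Nb {R : V → V → Prop} {S : Finset V} {x y : V} :
    y ∈ aNb R S x ↔ y ∈ S ∧ R x y := by simp [aNb]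

variable {R : V → V → Prop} (hr : ∀ x, R x x) (hs : ∀ x y, R x y → R y x)

include hs in
lemma aSimp_eq {S : Finset V} {x y : V} (hx : x ∈ S) (hy : y ∈ S) (sx : aSimp R S x)
    (sy : aSimp R S y) (h : R x y) : aNb R S x = aNb R S y := by
  ext z
  rw [aMem_Nb, aMem_Nb]
  constructor
  · rintro ⟨hz, h2⟩
    exact ⟨hz, by
      by_contra hc
      exact hc (sx y hy z hz h h2)⟩
  · rintro ⟨hz, h2⟩
    exact ⟨hz, sy x hx z hz (hs _ _ h) h2⟩

include hr hs in
lemma aExtend {S : Finset V} {A : Finset V} (hA : A ⊆ S) (hi : aInd R A) :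
    ∃ J ∈ aMIS R S, A ⊆ J := by
  let F := S.powerset.filter (fun J => aInd R J ∧ A ⊆ J)
  have hF : F.Nonempty := ⟨A, by simp [F, hA, hi]⟩
  obtain ⟨J, hJ, hmax⟩ := F.exists_max_image Finset.card hF
  simp only [F, Finset.mem_filter, Finset.mem_powerset] at hJ
  refine ⟨J, aMem_MIS.2 ⟨hJ.1, hJ.2.1, ?_⟩, hJ.2.2⟩
  intro v hv
  by_contra hc
  push Not at hc
  have hvJ : v ∉ J := fun h => hc v h (hr v)
  have := hmax (insert v J) (by
    simp only [F, Finset.mem_filter, Finset.mem_powerset]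
    refine ⟨Finset.insert_subset hv hJ.1, ?_, hJ.2.2.trans (Finset.subset_insert _ _)⟩
    intro a ha b hb hab
    rw [Finset.mem_insert] at ha hb
    rcases ha with rfl | ha <;> rcases hb with rfl | hb
    · rfl
    · exact absurd (hs _ _ hab) (hc b hb)
    · exact absurd hab (hc a ha)
    · exact hJ.2.1 a ha b hb hab)
  rw [Finset.card_insert_of_notMem hvJ] at this
  omega

include hr hs in
lemma aDominate (hc4 : ∀ a b c d, R a b → R b c → R c d → R d a → R a c ∨ R b d)
    {D W U : Finset V} (hD : ∀ u ∈ D, ∀ v ∈ D, R u v) (hU : U ⊆ D)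
    (hW : ∀ u ∈ U, ∃ z ∈ W, R u z) :
    ∃ A ⊆ W, aInd R A ∧ ∀ u ∈ U, ∃ a ∈ A, R a u := by
  let F := W.powerset.filter (fun J => aInd R J)
  have hF : F.Nonempty := ⟨∅, by rw [Finset.mem_filter]; exact ⟨by simp, by intro u hu; simp at hu⟩⟩
  let dom := fun A : Finset V => U.filter (fun u => ∃ a ∈ A, R a u)
  obtain ⟨A, hA, hmax⟩ := F.exists_max_image (fun A => (dom A).card) hF
  simp only [F, Finset.mem_filter, Finset.mem_powerset] at hA
  refine ⟨A, hA.1, hA.2, ?_⟩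
  by_contra hc
  push Not at hc
  obtain ⟨u, hu, hcu⟩ := hc
  obtain ⟨z, hz, huz⟩ := hW u hu
  have h1 := hmax (insert z (A.filter (fun a => ¬ R z a))) (by
    simp only [F, Finset.mem_filter, Finset.mem_powerset]
    refine ⟨Finset.insert_subset hz ((Finset.filter_subset _ _).trans hA.1), ?_⟩
    intro a ha b hb hab
    simp only [Finset.mem_insert, Finset.mem_filter] at ha hb
    rcases ha with rfl | ha <;> rcases hb with rfl | hb
    · rfl
    · exact absurd hab hb.2
    · exact absurd (hs _ _ hab) ha.2
    · exact hA.2 a ha.1 b hb.1 hab)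
  have h2 : dom A ⊂ dom (insert z (A.filter (fun a => ¬ R z a))) := by
    rw [Finset.ssubset_iff_of_subset]
    · refine ⟨u, ?_, ?_⟩
      · simp only [dom, Finset.mem_filter]
        exact ⟨hu, z, by simp, hs _ _ huz⟩
      · simp only [dom, Finset.mem_filter]
        rintro ⟨_, a, ha, h⟩
        exact hcu a ha h
    · intro v hv
      simp only [dom, Finset.mem_filter] at hv ⊢
      obtain ⟨hv, a, ha, hav⟩ := hv
      refine ⟨hv, ?_⟩
      by_cases hza : R z a
      · refine ⟨z, by simp, ?_⟩
        rcases hc4 v a z u (hs _ _ hav) (hs _ _ hza) (hs _ _ huz) (hD u (hU hu) v (hU hv)) with h | h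
        · exact hs _ _ h
        · exact absurd h (hcu a ha)
      · exact ⟨a, by simp [ha, hza], hav⟩
  have := Finset.card_lt_card h2
  omega

include hr hs in
theorem aMain (hc4 : ∀ a b c d, R a b → R b c → R c d → R d a → R a c ∨ R b d)
    (hsimp : ∀ S : Finset V, S.Nonempty → ∃ x ∈ S, aSimp R S x) (S : Finset V) :
    S.card + 1 ≤ (aMIS R S).card + (aSC R S).card := by
  induction hn : S.card generalizing S with
  | zero =>
    rw [Finset.card_eq_zero] at hn
    subst hn
    have : 0 < (aMIS R (∅ : Finset V)).card :=
      Finset.card_pos.2 ⟨∅, by simp [aMem_MIS, aInd]⟩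
    omega
  | succ n ih =>
    obtain ⟨x, hx, sx⟩ := hsimp S (Finset.card_pos.1 (by omega))
    set S' := S.erase x with hS'
    have hcard : S'.card = n := by rw [Finset.card_erase_of_mem hx]; omega
    have IH := ih S' hcard
    have hsub : S' ⊆ S := Finset.erase_subset _ _
    have hmem : ∀ z, z ∈ S' ↔ z ≠ x ∧ z ∈ S := fun z => Finset.mem_erase
    -- the injection
    let φ : Finset V → Finset V := fun J => if ∃ u ∈ J, R u x then J else insert x J
    have hφe : ∀ J ∈ aMIS R S', (φ J).erase x = J := by
      intro J hJ
      have hxJ : x ∉ J := fun h => ((hmem x).1 ((aMem_MIS.1 hJ).1 h)).1 rfl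
      simp only [φ]
      split_ifs
      · exact Finset.erase_eq_of_notMem hxJ
      · exact Finset.erase_insert hxJ
    have hφm : ∀ J ∈ aMIS R S', φ J ∈ aMIS R S := by
      intro J hJ
      obtain ⟨h1, h2, h3⟩ := aMem_MIS.1 hJ
      rw [aMem_MIS]
      simp only [φ]
      split_ifs with h
      · refine ⟨h1.trans hsub, h2, fun v hv => ?_⟩
        by_cases hvx : v = x
        · exact hvx ▸ h
        · exact h3 v ((hmem v).2 ⟨hvx, hv⟩)
      · push Not at h
        refine ⟨Finset.insert_subset hx (h1.trans hsub), ?_, fun v hv => ?_⟩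
        · intro a ha b hb hab
          rw [Finset.mem_insert] at ha hb
          rcases ha with rfl | ha <;> rcases hb with rfl | hb
          · rfl
          · exact absurd (hs _ _ hab) (h b hb)
          · exact absurd hab (h a ha)
          · exact h2 a ha b hb hab
        · by_cases hvx : v = x
          · exact ⟨x, by simp, hvx ▸ hr x⟩
          · obtain ⟨u, hu, huv⟩ := h3 v ((hmem v).2 ⟨hvx, hv⟩)
            exact ⟨u, by simp [hu], huv⟩
    have hinj : Set.InjOn φ (aMIS R S') := by
      intro J hJ K hK h
      rw [← hφe J hJ, ← hφe K hK, h]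
    have hle : (aMIS R S').card ≤ (aMIS R S).card :=
      Finset.card_le_card_of_injOn φ hφm hinj
    -- simplicial cliques
    set C := aNb R S x with hC
    have hCS : C ∈ aSC R S := aMem_SC.2 ⟨x, hx, sx, rfl⟩
    have hxC : x ∈ C := aMem_Nb.2 ⟨hx, hr x⟩
    have hC' : ∀ D ∈ aSC R S', D ≠ C := by
      rintro D hD rfl
      obtain ⟨y, hy, sy, hyD⟩ := aMem_SC.1 hD
      rw [← hyD, aMem_Nb, hmem] at hxC
      exact hxC.1.1 rfl
    have hgood : ∀ z ∈ S', aSimp R S' z → ¬ R z x → aNb R S' z ∈ aSC R S := by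
      intro z hz sz hzx
      refine aMem_SC.2 ⟨z, hsub hz, ?_, ?_⟩
      · intro a ha b hb h1 h2
        refine sz a ((hmem a).2 ⟨?_, ha⟩) b ((hmem b).2 ⟨?_, hb⟩) h1 h2
        · rintro rfl; exact hzx h1
        · rintro rfl; exact hzx h2
      · ext a
        rw [aMem_Nb, aMem_Nb, hmem]
        constructor
        · rintro ⟨h1, h2⟩
          refine ⟨⟨?_, h1⟩, h2⟩
          rintro rfl; exact hzx h2
        · rintro ⟨h1, h2⟩; exact ⟨h1.2, h2⟩
    by_cases hbad : ∃ D ∈ aSC R S', D ∉ aSC R S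
    · obtain ⟨D, hD, hDn⟩ := hbad
      obtain ⟨y, hy, sy, hyD⟩ := aMem_SC.1 hD
      have hyx : R y x := by
        by_contra h
        exact hDn (hyD ▸ hgood y hy sy h)
      have huniq : ∀ E ∈ aSC R S', E ∉ aSC R S → E = D := by
        intro E hE hEn
        obtain ⟨z, hz, sz, hzE⟩ := aMem_SC.1 hE
        have hzx : R z x := by
          by_contra h
          exact hEn (hzE ▸ hgood z hz sz h)
        have : R z y := sx z (hsub hz) y (hsub hy) (hs _ _ hzx) (hs _ _ hyx)
        rw [← hzE, ← hyD]
        exact aSimp_eq hs hz hy sz sy this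
      have hsc : (aSC R S').card ≤ (aSC R S).card := by
        have hsub2 : insert C ((aSC R S').erase D) ⊆ aSC R S := by
          intro E hE
          rw [Finset.mem_insert, Finset.mem_erase] at hE
          rcases hE with rfl | hE
          · exact hCS
          · by_contra h
            exact hE.1 (huniq E hE.2 h)
        have := Finset.card_le_card hsub2
        rw [Finset.card_insert_of_notMem (fun h => hC' C (Finset.mem_of_mem_erase h) rfl),
          Finset.card_erase_of_mem hD] at this
        have := Finset.card_pos.2 ⟨D, hD⟩
        omega
      have hDcl : ∀ u ∈ D, ∀ v ∈ D, R u v := by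
        intro u hu v hv
        rw [← hyD, aMem_Nb] at hu hv
        exact sy u hu.1 v hv.1 hu.2 hv.2
      have hCD : ∀ z ∈ S', R x z → z ∈ D := by
        intro z hz hxz
        rw [← hyD, aMem_Nb]
        exact ⟨hz, sx y (hsub hy) z (hsub hz) (hs _ _ hyx) hxz⟩
      obtain ⟨A, hAW, hAi, hAd⟩ := aDominate hr hs hc4 (D := D) (W := S' \ D)
        (U := D.filter (fun z => ¬ R x z)) hDcl (Finset.filter_subset _ _) (by
          intro z hz
          rw [Finset.mem_filter] at hz
          obtain ⟨hzD, hxz⟩ := hz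
          by_contra hno
          push Not at hno
          have hzS : z ∈ S' := by
            rw [← hyD, aMem_Nb] at hzD
            exact hzD.1
          have hyz : R y z := by
            rw [← hyD, aMem_Nb] at hzD
            exact hzD.2
          have hin : ∀ a ∈ S', R z a → a ∈ D := by
            intro a ha hza
            by_contra haD
            exact hno a (Finset.mem_sdiff.2 ⟨ha, haD⟩) hza
          have sz : aSimp R S' z := fun a ha b hb h1 h2 => hDcl a (hin a ha h1) b (hin b hb h2)
          apply hDn
          rw [← hyD, aSimp_eq hs hy hzS sy sz hyz]
          exact hgood z hzS sz (fun h => hxz (hs _ _ h)))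
      have hAS : insert x A ⊆ S :=
        Finset.insert_subset hx (fun a ha => hsub (Finset.mem_sdiff.1 (hAW ha)).1)
      have hAx : ∀ a ∈ A, ¬ R x a := fun a ha h =>
        (Finset.mem_sdiff.1 (hAW ha)).2 (hCD a (Finset.mem_sdiff.1 (hAW ha)).1 h)
      have hAI : aInd R (insert x A) := by
        intro a ha b hb hab
        rw [Finset.mem_insert] at ha hb
        rcases ha with rfl | ha <;> rcases hb with rfl | hb
        · rfl
        · exact absurd hab (hAx b hb)
        · exact absurd (hs _ _ hab) (hAx a ha)
        · exact hAi a ha b hb hab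
      obtain ⟨J, hJ, hAJ⟩ := aExtend hr hs hAS hAI
      have hJD : ∀ z ∈ D, z ∉ J := by
        intro z hzD hzJ
        have hzS' : z ∈ S' := by
          rw [← hyD, aMem_Nb] at hzD
          exact hzD.1
        by_cases hxz : R x z
        · have := (aMem_MIS.1 hJ).2.1 x (hAJ (by simp)) z hzJ hxz
          exact ((hmem z).1 hzS').1 this.symm
        · obtain ⟨a, ha, haz⟩ := hAd z (Finset.mem_filter.2 ⟨hzD, hxz⟩)
          have := (aMem_MIS.1 hJ).2.1 a (hAJ (by simp [ha])) z hzJ haz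
          subst this
          exact (Finset.mem_sdiff.1 (hAW ha)).2 hzD
      have hJn : J ∉ (aMIS R S').image φ := by
        intro h
        obtain ⟨K, hK, rfl⟩ := Finset.mem_image.1 h
        obtain ⟨u, hu, huy⟩ := (aMem_MIS.1 hK).2.2 y hy
        have huD : u ∈ D := by
          rw [← hyD, aMem_Nb]
          exact ⟨(aMem_MIS.1 hK).1 hu, hs _ _ huy⟩
        apply hJD u huD
        rw [← hφe K hK] at hu
        exact Finset.mem_of_mem_erase hu
      have hlt : (aMIS R S').card < (aMIS R S).card := by
        have : insert J ((aMIS R S').image φ) ⊆ aMIS R S := by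
          apply Finset.insert_subset hJ
          intro K hK
          obtain ⟨L, hL, rfl⟩ := Finset.mem_image.1 hK
          exact hφm L hL
        have := Finset.card_le_card this
        rw [Finset.card_insert_of_notMem hJn, Finset.card_image_of_injOn hinj] at this
        omega
      omega
    · push Not at hbad
      have : insert C (aSC R S') ⊆ aSC R S := Finset.insert_subset hCS hbad
      have := Finset.card_le_card this
      rw [Finset.card_insert_of_notMem (fun h => hC' C h rfl)] at this
      omega

end AbstractPart

section TreePart
open Classical SimpleGraph

variable {V : Type*} {G : SimpleGraph V}

lemma tLen (hG : G.IsTree) {a b : V} (p : G.Walk a b) (hp : p.IsPath) : p.length = G.dist a b := by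
  obtain ⟨q, hq, hl⟩ := hG.1.exists_path_of_dist a b
  rw [← hl, (hG.existsUnique_path a b).unique hp hq]

lemma tSupp (hG : G.IsTree) {a b : V} (p : G.Walk a b) (hp : p.IsPath) {y : V}
    (hy : y ∈ p.support) : G.dist a y + G.dist y b = G.dist a b := by
  have h := congrArg Walk.length (p.take_spec hy)
  rw [Walk.length_append, tLen hG _ (hp.takeUntil hy), tLen hG _ (hp.dropUntil hy),
    tLen hG p hp] at h
  exact h

lemma tMed (hG : G.IsTree) [Finite V] {a b : V} (p : G.Walk a b) (hp : p.IsPath) (c : V) :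
    ∃ y ∈ p.support, G.dist a c = G.dist a y + G.dist y c ∧
      G.dist b c = G.dist b y + G.dist y c := by
  obtain ⟨y, hy, hmin⟩ := p.support.toFinset.exists_min_image (fun y => G.dist y c)
    ⟨a, by simp⟩
  simp only [List.mem_toFinset] at hy hmin
  refine ⟨y, hy, ?_⟩
  obtain ⟨q, hq, hl⟩ := hG.1.exists_path_of_dist y c
  have key : ∀ {d : V} (r : G.Walk d y), r.IsPath → (∀ z ∈ r.support, z ∈ p.support) →
      G.dist d c = G.dist d y + G.dist y c := by
    intro d r hr hsub
    have : (r.append q).IsPath := by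
      rw [Walk.isPath_def, Walk.support_append, List.nodup_append]
      refine ⟨hr.support_nodup, hq.support_nodup.tail, ?_⟩
      rintro z hz w hw rfl
      have h1 := hmin z (hsub z hz)
      have h2 := tSupp hG q hq (List.mem_of_mem_tail hw)
      have h3 : G.dist y z = 0 := by omega
      have h4 : y = z := hG.1.dist_eq_zero_iff.1 h3
      subst h4
      have := hq.support_nodup
      rw [← Walk.cons_tail_support] at this
      exact (List.nodup_cons.1 this).1 hw
    rw [← tLen hG _ this, Walk.length_append, tLen hG _ hr, hl]
  constructor
  · exact key (p.takeUntil y hy) (hp.takeUntil hy) (fun z hz => p.support_takeUntil_subset_support hy hz)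
  · exact key (p.dropUntil y hy).reverse (hp.dropUntil hy).reverse
      (fun z hz => p.support_dropUntil_subset_support hy (by simpa using hz))

lemma tBetween (hG : G.IsTree) {a b : V} (p : G.Walk a b) (hp : p.IsPath) {y z : V}
    (hy : y ∈ p.support) (hz : z ∈ p.support) :
    G.dist a y + G.dist y z = G.dist a z ∨ G.dist a z + G.dist z y = G.dist a y := by
  rw [← p.take_spec hy, Walk.mem_support_append_iff] at hz
  rcases hz with hz | hz
  · exact Or.inr (tSupp hG _ (hp.takeUntil hy) hz)
  · left
    have h1 := tSupp hG _ (hp.dropUntil hy) hz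
    have h2 := tSupp hG p hp hy
    have h3 := tSupp hG p hp (p.support_dropUntil_subset_support hy hz)
    omega

lemma tFour (hG : G.IsTree) [Finite V] (a b c e : V) :
    G.dist a b + G.dist c e ≤ max (G.dist a c + G.dist b e) (G.dist a e + G.dist b c) := by
  obtain ⟨p, hp, -⟩ := hG.1.exists_path_of_dist a b
  obtain ⟨y, hy, h1, h2⟩ := tMed hG p hp c
  obtain ⟨z, hz, h3, h4⟩ := tMed hG p hp e
  have h5 := tSupp hG p hp hy
  have h6 := tSupp hG p hp hz
  have h7 := tBetween hG p hp hy hz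
  have h8 : G.dist c e ≤ G.dist c y + G.dist y e := hG.1.dist_triangle
  have h9 : G.dist y e ≤ G.dist y z + G.dist z e := hG.1.dist_triangle
  rw [G.dist_comm (u := c) (v := y)] at h8
  rw [G.dist_comm (u := b) (v := y)] at h2
  rw [G.dist_comm (u := b) (v := z)] at h4
  rw [G.dist_comm (u := z) (v := y)] at h7
  omega

end TreePart

section SpiderPart
open Classical SimpleGraph

lemma sp_adj0 {p m : ℕ} (i : Fin p) (j : Fin m) (h : (j : ℕ) = 0) :
    (spider p m).Adj none (some (i, j)) := by
  simp [spider, h]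

lemma sp_adjS {p m : ℕ} (i : Fin p) (j j' : Fin m) (h : (j : ℕ) + 1 = j') :
    (spider p m).Adj (some (i, j)) (some (i, j')) := by
  have : j ≠ j' := by rintro rfl; omega
  simp [spider, h, this]

def spDepth {p m : ℕ} : Option (Fin p × Fin m) → ℕ
  | none => 0
  | some (_, j) => j + 1

def spPot {p m : ℕ} (i : Fin p) : Option (Fin p × Fin m) → ℤ
  | none => 0
  | some (i', j) => if i' = i then (j : ℤ) + 1 else - ((j : ℤ) + 1)

def spPar {p m : ℕ} : Fin p × Fin m → Option (Fin p × Fin m)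
  | (i, j) => if h : (j : ℕ) = 0 then none else some (i, ⟨j - 1, by omega⟩)

lemma sp_par_adj {p m : ℕ} (x : Fin p × Fin m) : (spider p m).Adj (spPar x) (some x) := by
  obtain ⟨i, j⟩ := x
  unfold spPar
  dsimp only
  split_ifs with h
  · exact sp_adj0 i j h
  · exact sp_adjS i _ _ (by simp; omega)

/-- every edge joins a vertex and its parent -/
lemma sp_adj_cases {p m : ℕ} {u v : Option (Fin p × Fin m)} (h : (spider p m).Adj u v) :
    (∃ x, v = some x ∧ u = spPar x) ∨ (∃ x, u = some x ∧ v = spPar x) := by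
  have key : ∀ u v : Option (Fin p × Fin m), (match u, v with
    | none, some (_, j) => (j : ℕ) = 0
    | some (i, j), some (i', j') => i = i' ∧ (j : ℕ) + 1 = (j' : ℕ)
    | _, _ => False) → ∃ x, v = some x ∧ u = spPar x := by
    intro u v h
    match u, v, h with
    | none, some (i, j), h => exact ⟨(i, j), rfl, by simp [spPar]; exact h⟩
    | some (i, j), some (i', j'), h =>
      obtain ⟨rfl, h⟩ := h
      refine ⟨(i, j'), rfl, ?_⟩
      have h0 : ¬ (j' : ℕ) = 0 := by omega
      simp only [spPar, h0, dite_false]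
      congr 2
      ext
      simp; omega
  unfold spider at h
  rw [fromRel_adj] at h
  rcases h.2 with h | h
  · exact Or.inl (key _ _ h)
  · exact Or.inr (key _ _ h)

lemma sp_reach {p m : ℕ} (v : Option (Fin p × Fin m)) :
    ∃ w : (spider p m).Walk none v, w.length ≤ spDepth v := by
  match v with
  | none => exact ⟨Walk.nil, by simp⟩
  | some (i, ⟨j, hj⟩) =>
    induction j with
    | zero => exact ⟨Walk.cons (sp_adj0 i _ rfl) Walk.nil, by simp [spDepth]⟩
    | succ j ih =>
      obtain ⟨w, hw⟩ := ih (by omega)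
      refine ⟨w.concat (sp_adjS i _ _ rfl), ?_⟩
      simp [spDepth] at hw ⊢
      exact hw

lemma sp_conn (p m : ℕ) : (spider p m).Connected := by
  rw [connected_iff_exists_forall_reachable]
  exact ⟨none, fun w => (sp_reach w).choose.reachable⟩

lemma sp_tree (p m : ℕ) : (spider p m).IsTree := by
  rw [isTree_iff_connected_and_card]
  refine ⟨sp_conn p m, le_antisymm ?_ (sp_conn p m).card_vert_le_card_edgeSet_add_one⟩
  have : Nat.card (spider p m).edgeSet ≤ Nat.card (Fin p × Fin m) := by
    apply Nat.card_le_card_of_surjective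
      (fun x => (⟨s(spPar x, some x), sp_par_adj x⟩ : (spider p m).edgeSet))
    rintro ⟨e, he⟩
    induction e using Sym2.ind with
    | _ u v =>
      rcases sp_adj_cases he with ⟨x, rfl, rfl⟩ | ⟨x, rfl, rfl⟩
      · exact ⟨x, rfl⟩
      · exact ⟨x, by simp [Sym2.eq_swap]⟩
  rw [Finite.card_option]
  omega

lemma sp_dist_le {p m : ℕ} (u v : Option (Fin p × Fin m)) :
    (spider p m).dist u v ≤ spDepth u + spDepth v := by
  obtain ⟨w, hw⟩ := sp_reach u
  obtain ⟨w', hw'⟩ := sp_reach v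
  have := dist_le (w.reverse.append w')
  simp at this
  omega

lemma sp_pot_le {p m : ℕ} (i : Fin p) {u v : Option (Fin p × Fin m)} (w : (spider p m).Walk u v) :
    spPot i u - spPot i v ≤ w.length := by
  induction w with
  | nil => simp
  | cons h w ih =>
    rename_i a b c
    have : spPot i a - spPot i b ≤ 1 := by
      have hp : ∀ x : Fin p × Fin m, |spPot i (spPar x) - spPot i (some x)| ≤ 1 := by
        rintro ⟨i', j⟩
        by_cases h0 : (j : ℕ) = 0 <;> by_cases hi : i' = i <;>
          simp only [spPar, h0, dite_true, dite_false, spPot, hi, if_true, if_false, abs_le] <;>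
          omega
      rcases sp_adj_cases h with ⟨x, rfl, rfl⟩ | ⟨x, rfl, rfl⟩
      · exact (abs_le.1 (hp x)).2
      · have := (abs_le.1 (hp x)).1
        omega
    rw [Walk.length_cons]
    push_cast
    omega

lemma sp_dist_ge {p m : ℕ} {i i' : Fin p} (hi : i ≠ i') (j j' : Fin m) :
    (j : ℕ) + 1 + (j' + 1) ≤ (spider p m).dist (some (i, j)) (some (i', j')) := by
  obtain ⟨w, hw⟩ := (sp_conn p m).exists_walk_length_eq_dist (some (i, j)) (some (i', j'))
  have := sp_pot_le i w
  simp only [spPot, if_true, hi.symm, if_false] at this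
  omega

lemma mdi_iff {V : Type*} (G : SimpleGraph V) (k : ℕ) (J : Set V) :
    MaxDkIndep G k J ↔ (∀ u ∈ J, ∀ v ∈ J, G.dist u v ≤ k → u = v) ∧
      ∀ v, ∃ u ∈ J, G.dist u v ≤ k := by
  constructor
  · rintro ⟨h1, h2⟩
    refine ⟨fun u hu v hv h => ?_, fun v => ?_⟩
    · by_contra hne
      have := h1 hu hv hne
      omega
    · by_contra hc
      push Not at hc
      have hJ := h2 (insert v J) (by
        intro a ha b hb hab
        rcases ha with rfl | ha <;> rcases hb with rfl | hb
        · exact absurd rfl hab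
        · rw [dist_comm]; exact hc b hb
        · exact hc a ha
        · exact h1 ha hb hab) (Set.subset_insert _ _)
      have hv : v ∈ J := hJ ▸ Set.mem_insert v J
      have := hc v hv
      simp at this
  · rintro ⟨h1, h2⟩
    refine ⟨fun u hu v hv hne => ?_, fun J' hJ' hsub => ?_⟩
    · by_contra hc
      exact hne (h1 u hu v hv (by omega))
    · apply Set.Subset.antisymm _ hsub
      intro v hv
      obtain ⟨u, hu, huv⟩ := h2 v
      by_contra hvJ
      have := hJ' (hsub hu) hv (by rintro rfl; exact hvJ hu)
      omega

lemma mdi_eq_card {V : Type*} [Fintype V] (G : SimpleGraph V) (k : ℕ) :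
    mdi G k = (aMIS (fun u v => G.dist u v ≤ k) (Finset.univ : Finset V)).card := by
  have : {J : Set V | MaxDkIndep G k J} = (fun J : Finset V => (J : Set V)) ''
      (aMIS (fun u v => G.dist u v ≤ k) (Finset.univ : Finset V) : Set (Finset V)) := by
    ext J
    simp only [Set.mem_ofPred_eq, mdi_iff, Set.mem_image, Finset.mem_coe, aMem_MIS, aInd]
    constructor
    · intro h
      refine ⟨J.toFinset, ?_, by simp⟩
      simpa using h
    · rintro ⟨K, hK, rfl⟩
      simpa using hK
  rw [mdi, this, Set.ncard_image_of_injective _ Finset.coe_injective, Set.ncard_coe_finset]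

lemma mdi_iso {V W : Type*} {G : SimpleGraph V} {H : SimpleGraph W} (e : G ≃g H) (k : ℕ) :
    mdi G k = mdi H k := by
  have hd : ∀ u v, H.dist (e u) (e v) = G.dist u v := by
    intro u v
    by_cases h : G.Reachable u v
    · have h' : H.Reachable (e u) (e v) := h.map e.toHom
      apply le_antisymm
      · obtain ⟨w, hw⟩ := h.exists_walk_length_eq_dist
        rw [← hw, ← Walk.length_map e.toHom w]
        exact dist_le _
      · obtain ⟨w, hw⟩ := h'.exists_walk_length_eq_dist
        rw [← hw, ← Walk.length_map e.symm.toHom w]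
        have := dist_le (w.map e.symm.toHom)
        simpa using this
    · have h' : ¬ H.Reachable (e u) (e v) := by
        rwa [Iso.reachable_iff]
      rw [dist_eq_zero_of_not_reachable h, dist_eq_zero_of_not_reachable h']
  have : {J : Set W | MaxDkIndep H k J} = (fun J => e '' J) '' {J : Set V | MaxDkIndep G k J} := by
    ext J
    simp only [Set.mem_image, Set.mem_ofPred_eq, mdi_iff]
    have hsurj : ∀ w, ∃ v, e v = w := e.surjective
    constructor
    · intro h
      refine ⟨e ⁻¹' J, ⟨?_, ?_⟩, Set.image_preimage_eq _ e.surjective⟩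
      · intro u hu v hv huv
        exact e.injective (h.1 _ hu _ hv (by rw [hd]; exact huv))
      · intro v
        obtain ⟨w, hw, h'⟩ := h.2 (e v)
        obtain ⟨u, rfl⟩ := hsurj w
        exact ⟨u, hw, by rwa [hd] at h'⟩
    · rintro ⟨K, hK, rfl⟩
      constructor
      · rintro _ ⟨u, hu, rfl⟩ _ ⟨v, hv, rfl⟩ h
        rw [hK.1 u hu v hv (by rwa [hd] at h)]
      · intro w
        obtain ⟨v, rfl⟩ := hsurj w
        obtain ⟨u, hu, h⟩ := hK.2 v
        exact ⟨e u, ⟨u, hu, rfl⟩, by rwa [hd]⟩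
  rw [mdi, mdi, this, Set.ncard_image_of_injective _ e.injective.image_injective]

lemma sp_mdi {p m : ℕ} (hp : 2 ≤ p) (hm : 1 ≤ m) :
    mdi (spider p m) (2 * m - 1) = p * (m - 1) + 2 := by
  let last : Fin m := ⟨m - 1, by omega⟩
  let leaf : Fin p → Option (Fin p × Fin m) := fun i => some (i, last)
  have hlinj : Function.Injective leaf := by
    intro i j h; simpa [leaf] using h
  have hdep : ∀ v : Option (Fin p × Fin m), spDepth v ≤ m := by
    rintro (_ | ⟨i, j⟩) <;> simp [spDepth] <;> omega
  have hdep' : ∀ v, v ∉ Set.range leaf → spDepth v ≤ m - 1 := by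
    rintro (_ | ⟨i, j⟩) h
    · simp [spDepth]
    · have : (j : ℕ) ≠ m - 1 := by
        intro hj
        exact h ⟨i, by simp [leaf, last, Fin.ext_iff, hj]⟩
      simp only [spDepth]
      omega
  have hR : ∀ u v, v ∉ Set.range leaf → (spider p m).dist u v ≤ 2 * m - 1 := by
    intro u v h
    have := sp_dist_le u v
    have := hdep u
    have := hdep' v h
    omega
  have hL : ∀ i j, (spider p m).dist (leaf i) (leaf j) ≤ 2 * m - 1 → i = j := by
    intro i j h
    by_contra hne
    have := sp_dist_ge hne last last
    simp only [leaf] at h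
    have : (last : ℕ) = m - 1 := rfl
    omega
  have hset : {J | MaxDkIndep (spider p m) (2 * m - 1) J} =
      insert (Set.range leaf) ((fun v => {v}) '' (Set.range leaf)ᶜ) := by
    ext J
    simp only [Set.mem_ofPred_eq, mdi_iff, Set.mem_insert_iff, Set.mem_image, Set.mem_compl_iff]
    constructor
    · rintro ⟨h1, h2⟩
      by_cases h : ∃ v ∈ J, v ∉ Set.range leaf
      · right
        obtain ⟨v, hv, hvl⟩ := h
        refine ⟨v, hvl, ?_⟩
        ext u
        simp only [Set.mem_singleton_iff]
        exact ⟨fun h => h ▸ hv, fun hu => h1 u hu v hv (hR u v hvl)⟩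
      · left
        push Not at h
        apply Set.Subset.antisymm h
        rintro _ ⟨i, rfl⟩
        obtain ⟨u, hu, hd⟩ := h2 (leaf i)
        obtain ⟨j, rfl⟩ := h u hu
        rwa [← hL j i hd]
    · rintro (rfl | ⟨v, hv, rfl⟩)
      · constructor
        · rintro _ ⟨i, rfl⟩ _ ⟨j, rfl⟩ h
          rw [hL i j h]
        · intro v
          by_cases hv : v ∈ Set.range leaf
          · exact ⟨v, hv, by simp⟩
          · exact ⟨leaf ⟨0, by omega⟩, ⟨_, rfl⟩, hR _ _ hv⟩
      · constructor
        · rintro a rfl b rfl _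
          rfl
        · intro u
          exact ⟨v, rfl, by rw [dist_comm]; exact hR _ _ hv⟩
  rw [mdi, hset, Set.ncard_insert_of_notMem, Set.ncard_image_of_injective _ Set.singleton_injective,
    Set.ncard_compl, ← Set.image_univ, Set.ncard_image_of_injective _ hlinj, Set.ncard_univ,
    Finite.card_option]
  · simp only [Nat.card_eq_fintype_card, Fintype.card_prod, Fintype.card_fin]
    obtain ⟨m, rfl⟩ : ∃ t, m = t + 1 := ⟨m - 1, by omega⟩
    have : p * (m + 1) + 1 - p = p * m + 1 := by
      rw [mul_add]; omega
    simp only [Nat.add_sub_cancel]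
    omega
  · rintro ⟨v, hv, h⟩
    apply hv
    have : v ∈ ({v} : Set _) := rfl
    rw [← h]
    exact this

/-- many far-apart points force a spider -/
lemma sp_of_far {V : Type*} [Fintype V] {G : SimpleGraph V} (hG : G.IsTree) {p m : ℕ} (hp : 2 ≤ p)
    (hm : 1 ≤ m) (hV : Fintype.card V = p * m + 1) (x : Fin p → V)
    (hx : ∀ i j, i ≠ j → 2 * m ≤ G.dist (x i) (x j)) : Nonempty (G ≃g spider p m) := by
  have hpath : ∀ i, ∃ Q : ℕ → V, (∀ t ≤ m, G.dist (x i) (Q t) = t) ∧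
      ∀ t < m, G.Adj (Q t) (Q (t + 1)) := by
    intro i
    obtain ⟨j, hj⟩ : ∃ j : Fin p, i ≠ j := by
      have : Nontrivial (Fin p) := Fin.nontrivial_iff_two_le.2 hp
      obtain ⟨j, hj⟩ := exists_ne i
      exact ⟨j, hj.symm⟩
    obtain ⟨w, hw, hl⟩ := hG.1.exists_path_of_dist (x i) (x j)
    have hlen : 2 * m ≤ w.length := hl ▸ hx i j hj
    refine ⟨w.getVert, fun t ht => ?_, fun t ht => w.adj_getVert_succ (by omega)⟩
    rw [← tLen hG (w.take t) (hw.take t), Walk.take_length]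
    omega
  choose Q hQ hQa using hpath
  have hfar : ∀ i j s t, s ≤ m → t ≤ m → s + t < 2 * m → Q i s = Q j t → i = j ∧ s = t := by
    intro i j s t hs ht hst h
    have hi := hQ i s hs
    have hj := hQ j t ht
    have : i = j := by
      by_contra hne
      have h1 := hx i j hne
      have h2 : G.dist (x i) (x j) ≤ G.dist (x i) (Q i s) + G.dist (Q i s) (x j) :=
        hG.1.dist_triangle
      rw [h, G.dist_comm (u := Q j t), ← h, hi, h, hj] at h2
      omega
    subst this
    rw [h] at hi
    exact ⟨rfl, by omega⟩
  let i0 : Fin p := ⟨0, by omega⟩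
  let f : Option (Fin p × Fin m) → V
    | none => Q i0 m
    | some (i, j) => Q i (m - 1 - j)
  have hinj : Function.Injective f := by
    rintro (_ | ⟨i, j⟩) (_ | ⟨i', j'⟩) h
    · rfl
    · have := (hfar _ _ _ _ le_rfl (by omega) (by omega) h).2
      omega
    · have := (hfar _ _ _ _ (by omega) le_rfl (by omega) h).2
      omega
    · obtain ⟨rfl, h2⟩ := hfar _ _ _ _ (by omega) (by omega) (by omega) h
      have : j = j' := by ext; omega
      rw [this]
  have hbij : Function.Bijective f := by
    rw [Fintype.bijective_iff_injective_and_card]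
    refine ⟨hinj, ?_⟩
    simp [hV]
  have hc : ∀ i, Q i m = f none := by
    intro i
    obtain ⟨v, hv⟩ := hbij.2 (Q i m)
    match v, hv with
    | none, hv => exact hv.symm
    | some (i', j), hv =>
      have := (hfar _ _ _ _ (by omega) le_rfl (by omega) hv).2
      omega
  have hhom : ∀ u v, (spider p m).Adj u v → G.Adj (f u) (f v) := by
    have hpar : ∀ y : Fin p × Fin m, G.Adj (f (spPar y)) (f (some y)) := by
      rintro ⟨i, j⟩
      unfold spPar
      dsimp only
      split_ifs with h
      · rw [← hc i]
        have := (hQa i (m - 1) (by omega)).symm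
        simpa [f, h, Nat.sub_add_cancel hm] using this
      · have := (hQa i (m - 1 - j) (by omega)).symm
        have h2 : m - 1 - (j - 1 : ℕ) = m - 1 - j + 1 := by omega
        simp only [f]
        rw [h2]
        exact this
    intro u v h
    rcases sp_adj_cases h with ⟨y, rfl, rfl⟩ | ⟨y, rfl, rfl⟩
    · exact hpar y
    · exact (hpar y).symm
  let e : Option (Fin p × Fin m) ≃ V := Equiv.ofBijective f hbij
  let H : SimpleGraph (Option (Fin p × Fin m)) := G.comap e
  let eH : H ≃g G := SimpleGraph.Iso.comap e G
  have hHt : H.IsTree := (Iso.isTree_iff eH).2 hG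
  have hle : spider p m ≤ H := fun u v h => hhom u v h
  have heq : spider p m = H :=
    le_antisymm hle ((isTree_iff_minimal_connected.1 hHt).2 (sp_conn p m) hle)
  rw [heq]
  exact ⟨eH.symm⟩

theorem tree_dichotomy {V : Type*} [Fintype V] {G : SimpleGraph V} (hG : G.IsTree) {p m : ℕ}
    (hp : 2 ≤ p) (hm : 1 ≤ m) (hV : Fintype.card V = p * m + 1) :
    p * (m - 1) + 2 < mdi G (2 * m - 1) ∨ Nonempty (G ≃g spider p m) := by
  set R : V → V → Prop := fun u v => G.dist u v ≤ 2 * m - 1 with hRdef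
  have hr : ∀ x, R x x := fun x => by simp [R]
  have hs : ∀ x y, R x y → R y x := fun x y h => by simpa [R, G.dist_comm (u := y)] using h
  have hmain := aMain (R := R) hr hs
    (by
      intro a b c d h1 h2 h3 h4
      simp only [R] at *
      have := tFour hG a c b d
      rw [G.dist_comm (u := d) (v := a)] at h4
      rw [G.dist_comm (u := b) (v := c)] at h2
      by_contra hc
      push Not at hc
      rcases le_max_iff.1 this with h | h <;> omega)
    (by
      intro S hS
      obtain ⟨r, hrS⟩ := hS
      obtain ⟨x, hx, hmax⟩ := S.exists_max_image (fun y => G.dist r y) ⟨r, hrS⟩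
      refine ⟨x, hx, fun y hy z hz h1 h2 => ?_⟩
      have hy' := hmax y hy
      have hz' := hmax z hz
      simp only [R] at *
      have := tFour hG r x y z
      rcases le_max_iff.1 this with h | h <;> omega) Finset.univ
  have hmdi : mdi G (2 * m - 1) = (aMIS R Finset.univ).card := mdi_eq_card G _
  rw [← hmdi, Finset.card_univ, hV] at hmain
  by_cases hsc : (aSC R Finset.univ).card < p
  · left
    obtain ⟨m, rfl⟩ : ∃ t, m = t + 1 := ⟨m - 1, by omega⟩
    rw [mul_add] at hmain
    simp only [Nat.add_sub_cancel]
    omega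
  · right
    push Not at hsc
    have hrep : ∀ D : aSC R (Finset.univ : Finset V), ∃ y, aSimp R Finset.univ y ∧
        aNb R Finset.univ y = D := by
      rintro ⟨D, hD⟩
      obtain ⟨y, -, h1, h2⟩ := aMem_SC.1 hD
      exact ⟨y, h1, h2⟩
    choose y hy1 hy2 using hrep
    obtain ⟨g⟩ : Nonempty (Fin p ↪ aSC R (Finset.univ : Finset V)) :=
      Function.Embedding.nonempty_of_card_le (by simpa using hsc)
    refine sp_of_far hG hp hm hV (fun i => y (g i)) ?_
    intro i j hij
    by_contra hc
    apply hij
    apply g.injective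
    apply Subtype.ext
    rw [← hy2, ← hy2]
    exact aSimp_eq hs (Finset.mem_univ _) (Finset.mem_univ _) (hy1 _) (hy1 _)
      (by simp only [R]; omega)

end SpiderPart

/-- Let `k ≥ 3` be odd, `n ≥ k + 2` with `⌊k/2⌋ + 1 ∣ n − 1`, and
`p = (n−1)/(⌊k/2⌋+1)`. Then an `n`-vertex tree `T` satisfies `mdi_k(T) = f_k(n)` iff
`T ≅ S_{p,⌊k/2⌋+1}`; in particular, up to isomorphism there is a unique `n`-vertex
tree with the minimum possible number of `k`-MDISs among all `n`-vertex trees. -/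
theorem stmt_18 (k : ℕ) (hk : 3 ≤ k) (hodd : Odd k) (n : ℕ) (hn : k + 2 ≤ n)
    (hdvd : (k / 2 + 1) ∣ (n - 1)) (p : ℕ) (hp : p = (n - 1) / (k / 2 + 1)) :
    (∀ T : SimpleGraph (Fin n), T.IsTree →
      (mdi T k = fk k n ↔ Nonempty (T ≃g spider p (k / 2 + 1)))) ∧
    (∃ T : SimpleGraph (Fin n), T.IsTree ∧
      (∀ T' : SimpleGraph (Fin n), T'.IsTree → mdi T k ≤ mdi T' k) ∧
      Nonempty (T ≃g spider p (k / 2 + 1)) ∧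
      (∀ T'' : SimpleGraph (Fin n), T''.IsTree →
        (∀ T' : SimpleGraph (Fin n), T'.IsTree → mdi T'' k ≤ mdi T' k) →
        Nonempty (T'' ≃g T))) := by
  obtain ⟨t, rfl⟩ := hodd
  have hm : (2 * t + 1) / 2 + 1 = t + 1 := by omega
  rw [hm] at hdvd hp ⊢
  obtain ⟨q, hq⟩ := hdvd
  have hpq : p = q := by rw [hp, hq, Nat.mul_div_cancel_left _ (by omega)]
  subst hpq
  have hn' : n = p * (t + 1) + 1 := by
    rw [mul_comm]; omega
  have hp2 : 2 ≤ p := by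
    by_contra hc
    have : p ≤ 1 := by omega
    have : p * (t + 1) ≤ 1 * (t + 1) := Nat.mul_le_mul_right _ this
    omega
  have hk' : 2 * t + 1 = 2 * (t + 1) - 1 := by omega
  have hfk : fk (2 * t + 1) n = p * t + 2 := by
    have h1 : (2 * t + 1) % 2 = 1 := by omega
    have h2 : p * (t + 1) / (t + 1) = p := Nat.mul_div_cancel _ (by omega)
    unfold fk
    rw [if_neg (by omega), hm, h1, hn', Nat.add_sub_cancel, h2, mul_add]
    omega
  have hsp : mdi (spider p (t + 1)) (2 * t + 1) = p * t + 2 := by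
    rw [hk', sp_mdi hp2 (by omega), Nat.add_sub_cancel]
  have hcard : Fintype.card (Fin n) = p * (t + 1) + 1 := by rw [Fintype.card_fin, hn']
  have hdich : ∀ T : SimpleGraph (Fin n), T.IsTree →
      p * t + 2 < mdi T (2 * t + 1) ∨ Nonempty (T ≃g spider p (t + 1)) := by
    intro T hT
    have := tree_dichotomy hT hp2 (by omega : 1 ≤ t + 1) hcard
    rwa [← hk', Nat.add_sub_cancel] at this
  have hiso : ∀ T : SimpleGraph (Fin n), Nonempty (T ≃g spider p (t + 1)) →
      mdi T (2 * t + 1) = p * t + 2 := by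
    rintro T ⟨e⟩
    rw [mdi_iso e, hsp]
  refine ⟨fun T hT => ⟨fun h => ?_, fun h => ?_⟩, ?_⟩
  · rcases hdich T hT with h' | h'
    · omega
    · exact h'
  · rw [hiso T h, hfk]
  · have e : Fin n ≃ Option (Fin p × Fin (t + 1)) := Fintype.equivOfCardEq (by simp [hn'])
    let T : SimpleGraph (Fin n) := (spider p (t + 1)).comap e
    let eT : T ≃g spider p (t + 1) := SimpleGraph.Iso.comap e _
    have hT : T.IsTree := (SimpleGraph.Iso.isTree_iff eT).2 (sp_tree _ _)
    refine ⟨T, hT, fun T' hT' => ?_, ⟨eT⟩, fun T'' hT'' hmin => ?_⟩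
    · rw [hiso T ⟨eT⟩]
      rcases hdich T' hT' with h | h
      · exact h.le
      · exact (hiso T' h).ge
    · have h1 := hmin T hT
      rw [hiso T ⟨eT⟩] at h1
      rcases hdich T'' hT'' with h | h
      · omega
      · exact ⟨h.some.trans eT.symm⟩
end
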